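/- arXiv:0905.2497 — 11 statements merged into one kernel-verified Lean document; each statement's English description precedes it below -/
import Mathlib

section
/- Suppose Y ⊂ ℝ^p and K are compact. Then the set-valued mapping y ↦ K_y is Borel measurable as a map from Y into the space of nonempty compact subsets of ℝ^n topologized by the Hausdorff metric, and the optimal value function y ↦ J(y) is Borel measurable on Y. -/
open MeasureTheory Set TopologicalSpace Filter Topology

/-- measurability of the set-valued map `y ↦ K_y` (viewed as a map into the
space of nonempty compact subsets of ℝ^n with the Hausdorff metric) and of the optimal
value function `J` on `Y`. -/
theorem stmt0 (n p m : ℕ)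
    (Y : Set (Fin p → ℝ)) (hYc : IsCompact Y)
    (f : (Fin n → ℝ) × (Fin p → ℝ) → ℝ) (hf : Continuous f)
    (h : Fin m → (Fin n → ℝ) × (Fin p → ℝ) → ℝ) (hh : ∀ j, Continuous (h j))
    (K : Set ((Fin n → ℝ) × (Fin p → ℝ)))
    (hKdef : K = {w | w.2 ∈ Y ∧ ∀ j, 0 ≤ h j w}) (hKc : IsCompact K)
    (Ky : (Fin p → ℝ) → Set (Fin n → ℝ))
    (hKy : ∀ y, Ky y = {x | ∀ j, 0 ≤ h j (x, y)})
    (hne : ∀ y ∈ Y, (Ky y).Nonempty)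
    (J : (Fin p → ℝ) → ℝ)
    (hJ : ∀ y, J y = sInf ((fun x => f (x, y)) '' Ky y)) :
    (∃ F : (Fin p → ℝ) → NonemptyCompacts (Fin n → ℝ),
      (∀ y ∈ Y, (F y : Set (Fin n → ℝ)) = Ky y) ∧
      @Measurable _ _ _ (borel (NonemptyCompacts (Fin n → ℝ))) (fun y : Y => F y.1)) ∧
    Measurable (fun y : Y => J y.1) := by
  have hmem : ∀ x y, (x, y) ∈ K ↔ y ∈ Y ∧ x ∈ Ky y := by
    intro x y; rw [hKdef, hKy]; rfl
  have hcomp : ∀ y ∈ Y, IsCompact (Ky y) := by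
    intro y hy
    have hcl : IsClosed (Ky y) := by
      rw [hKy, ofPred_forall]
      exact isClosed_iInter fun j => isClosed_le continuous_const ((hh j).comp (by fun_prop))
    refine (hKc.image continuous_fst).of_isClosed_subset hcl ?_
    intro x hx
    exact ⟨(x, y), (hmem x y).2 ⟨hy, hx⟩, rfl⟩
  -- key: closed constraint sets on the product give closed (hence measurable) projections
  have key : ∀ C : Set ((Fin n → ℝ) × (Fin p → ℝ)), IsClosed C →
      MeasurableSet {y : Y | ∃ x ∈ Ky y.1, (x, y.1) ∈ C} := by
    intro C hC
    have h1 : IsClosed (Prod.snd '' (K ∩ C)) :=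
      ((hKc.inter_right hC).image continuous_snd).isClosed
    have h2 : {y : Y | ∃ x ∈ Ky y.1, (x, y.1) ∈ C} = Subtype.val ⁻¹' (Prod.snd '' (K ∩ C)) := by
      ext y
      constructor
      · rintro ⟨x, hx, hxC⟩
        exact ⟨(x, y.1), ⟨(hmem _ _).2 ⟨y.2, hx⟩, hxC⟩, rfl⟩
      · rintro ⟨⟨x, y'⟩, ⟨hK, hxC⟩, hy⟩
        obtain rfl : y' = y.1 := hy
        exact ⟨x, ((hmem _ _).1 hK).2, hxC⟩
    rw [h2]
    exact (h1.preimage continuous_subtype_val).measurableSet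
  constructor
  · classical
    let F : (Fin p → ℝ) → NonemptyCompacts (Fin n → ℝ) := fun y =>
      if hy : y ∈ Y then ⟨⟨Ky y, hcomp y hy⟩, hne y hy⟩ else ⟨⟨{0}, isCompact_singleton⟩, ⟨0, rfl⟩⟩
    have hF : ∀ y ∈ Y, (F y : Set (Fin n → ℝ)) = Ky y := by
      intro y hy
      simp only [F, dif_pos hy]
      rfl
    refine ⟨F, hF, ?_⟩
    have hclosed : ∀ C : Set (Fin n → ℝ), IsClosed C →
        MeasurableSet {y : Y | ((F y.1 : Set (Fin n → ℝ)) ∩ C).Nonempty} := by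
      intro C hC
      have := key (Prod.fst ⁻¹' C) (hC.preimage continuous_fst)
      convert this using 3 with y
      rw [hF y.1 y.2]; rfl
    have hgen := induced_generateFrom_eq (α := NonemptyCompacts (Fin n → ℝ))
      (b := powerset '' {U : Set (Fin n → ℝ) | IsOpen U} ∪
        (fun V => {s | (s ∩ V).Nonempty}) '' {V : Set (Fin n → ℝ) | IsOpen V})
      (f := fun s : NonemptyCompacts (Fin n → ℝ) => (s : Set (Fin n → ℝ)))
    rw [borel_eq_generateFrom_of_subbasis hgen]
    apply measurable_generateFrom
    rintro _ ⟨_, (⟨U, hU, rfl⟩ | ⟨U, hU, rfl⟩), rfl⟩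
    · have := (hclosed Uᶜ (IsOpen.isClosed_compl hU)).compl
      convert this using 1
      ext y
      simp [inter_compl_nonempty_iff]
    · have hU2 : IsOpen U := hU
      obtain ⟨C, hC, -, hCU, -⟩ := hU2.exists_iUnion_isClosed
      have := MeasurableSet.iUnion fun i => hclosed (C i) (hC i)
      convert this using 1
      ext y
      simp only [mem_preimage, mem_ofPred, mem_iUnion, ← hCU, inter_iUnion, nonempty_iUnion]
  · apply measurable_of_Iic
    intro c
    have := key {w | f w ≤ c} (isClosed_le hf continuous_const)
    convert this using 1
    ext y
    have hc : IsCompact ((fun x => f (x, y.1)) '' Ky y.1) :=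
      (hcomp y.1 y.2).image (by fun_prop)
    have hn := (hne y.1 y.2).image (fun x => f (x, y.1))
    simp only [mem_preimage, mem_Iic, mem_ofPred, hJ]
    constructor
    · intro hle
      obtain ⟨x, hx, hxe⟩ := hc.sInf_mem hn
      exact ⟨x, hx, by rw [← hxe] at hle; exact hle⟩
    · rintro ⟨x, hx, hxc⟩
      exact (csInf_le hc.bddBelow ⟨x, hx, rfl⟩).trans hxc
end

section
/- Suppose Y ⊂ ℝ^p and K are compact. Then there exists a Borel measurable selector g : Y → ℝ^n such that g(y) ∈ K_y and J(y) = f(g(y), y) for every y ∈ Y. -/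
open MeasureTheory Set TopologicalSpace Filter Topology

/-- Compact nonempty valued maps hitting closed sets measurably. -/
def MeasCorr {α Z : Type*} [MeasurableSpace α] [TopologicalSpace Z] (F : α → Set Z) : Prop :=
  (∀ a, IsCompact (F a)) ∧ (∀ a, (F a).Nonempty) ∧
    ∀ C : Set Z, IsClosed C → MeasurableSet {a | (F a ∩ C).Nonempty}

theorem MeasCorr.argmin {α Z : Type*} [MeasurableSpace α] [TopologicalSpace Z]
    {F : α → Set Z} (hF : MeasCorr F) {φ : Z → ℝ} (hφ : Continuous φ) :
    MeasCorr (fun a => {z | z ∈ F a ∧ ∀ w ∈ F a, φ z ≤ φ w}) := by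
  obtain ⟨h1, h2, h3⟩ := hF
  refine ⟨fun a => ?_, fun a => ?_, fun C hC => ?_⟩
  · have : {z | z ∈ F a ∧ ∀ w ∈ F a, φ z ≤ φ w} = F a ∩ ⋂ w ∈ F a, {z | φ z ≤ φ w} := by
      ext z; simp
    beta_reduce; rw [this]
    exact (h1 a).inter_right
      (isClosed_biInter fun w _ => isClosed_le hφ continuous_const)
  · obtain ⟨z, hz, hm⟩ := (h1 a).exists_isMinOn (h2 a) hφ.continuousOn
    exact ⟨z, hz, fun w hw => hm hw⟩
  · have hcl : ∀ q : ℚ, IsClosed {z | φ z ≤ (q : ℝ)} := fun q => isClosed_le hφ continuous_const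
    have key : {a | ({z | z ∈ F a ∧ ∀ w ∈ F a, φ z ≤ φ w} ∩ C).Nonempty} =
        {a | (F a ∩ C).Nonempty} ∩ ⋂ q : ℚ, ({a | (F a ∩ {z | φ z ≤ (q : ℝ)}).Nonempty}ᶜ ∪
          {a | (F a ∩ (C ∩ {z | φ z ≤ (q : ℝ)})).Nonempty}) := by
      ext a
      simp only [mem_inter_iff, mem_iInter, mem_union, mem_compl_iff, mem_setOf_eq]
      constructor
      · rintro ⟨z, ⟨hz, hm⟩, hzC⟩
        refine ⟨⟨z, hz, hzC⟩, fun q => ?_⟩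
        by_cases hq : (F a ∩ {z | φ z ≤ (q : ℝ)}).Nonempty
        · obtain ⟨w, hw, hwq⟩ := hq
          exact Or.inr ⟨z, hz, hzC, (hm w hw).trans hwq⟩
        · exact Or.inl hq
      · rintro ⟨hne, hq⟩
        obtain ⟨z, hz, hm⟩ := ((h1 a).inter_right hC).exists_isMinOn hne hφ.continuousOn
        refine ⟨z, ⟨hz.1, fun w hw => ?_⟩, hz.2⟩
        by_contra hlt
        obtain ⟨q, hq1, hq2⟩ := exists_rat_btwn (not_le.mp hlt)
        rcases hq q with h | ⟨v, hv, hvC, hvq⟩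
        · exact h ⟨w, hw, hq1.le⟩
        · have h5 : φ z ≤ φ v := hm (show v ∈ F a ∩ C from ⟨hv, hvC⟩)
          have h6 : φ v ≤ q := hvq
          linarith
    rw [key]
    exact (h3 C hC).inter (MeasurableSet.iInter fun q =>
      (h3 _ (hcl q)).compl.union (h3 _ (hC.inter (hcl q))))

theorem MeasCorr.refine_list {α Z : Type*} [MeasurableSpace α] [TopologicalSpace Z]
    (L : List (Z → ℝ)) : ∀ {F : α → Set Z}, MeasCorr F → (∀ φ ∈ L, Continuous φ) →
    ∃ G : α → Set Z, MeasCorr G ∧ (∀ a, G a ⊆ F a) ∧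
      ∀ φ ∈ L, ∀ a, ∀ z ∈ G a, ∀ w ∈ G a, φ z = φ w := by
  induction L with
  | nil => intro F hF _; exact ⟨F, hF, fun a => Subset.rfl, by simp⟩
  | cons ψ L ih =>
    intro F hF hL
    obtain ⟨G, hG, hs, hc⟩ := ih (hF.argmin (hL ψ (by simp))) (fun φ h => hL φ (by simp [h]))
    refine ⟨G, hG, fun a z hz => (hs a hz).1, fun φ hφ a z hz w hw => ?_⟩
    rcases List.mem_cons.mp hφ with rfl | h
    · exact le_antisymm ((hs a hz).2 w (hs a hw).1) ((hs a hw).2 z (hs a hz).1)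
    · exact hc φ h a z hz w hw

/-- existence of a Borel measurable selector `g : Y → ℝ^n` with
`g y ∈ K_y` and `J y = f (g y, y)` for every `y ∈ Y`. -/
theorem stmt1 (n p m : ℕ)
    (Y : Set (Fin p → ℝ)) (hYc : IsCompact Y)
    (f : (Fin n → ℝ) × (Fin p → ℝ) → ℝ) (hf : Continuous f)
    (h : Fin m → (Fin n → ℝ) × (Fin p → ℝ) → ℝ) (hh : ∀ j, Continuous (h j))
    (K : Set ((Fin n → ℝ) × (Fin p → ℝ)))
    (hKdef : K = {w | w.2 ∈ Y ∧ ∀ j, 0 ≤ h j w}) (hKc : IsCompact K)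
    (Ky : (Fin p → ℝ) → Set (Fin n → ℝ))
    (hKy : ∀ y, Ky y = {x | ∀ j, 0 ≤ h j (x, y)})
    (hne : ∀ y ∈ Y, (Ky y).Nonempty)
    (J : (Fin p → ℝ) → ℝ)
    (hJ : ∀ y, J y = sInf ((fun x => f (x, y)) '' Ky y)) :
    ∃ g : (Fin p → ℝ) → (Fin n → ℝ),
      Measurable (fun y : Y => g y.1) ∧
      ∀ y ∈ Y, g y ∈ Ky y ∧ J y = f (g y, y) := by
  have hYcl := hYc.isClosed
  have h0 : MeasCorr (fun y : Y => K ∩ {w | w.2 = y.1}) := by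
    refine ⟨fun y => hKc.inter_right (isClosed_eq continuous_snd continuous_const),
      fun y => ?_, fun C hC => ?_⟩
    · obtain ⟨x, hx⟩ := hne y.1 y.2
      rw [hKy] at hx
      refine ⟨(x, y.1), ?_, rfl⟩
      rw [hKdef]
      exact ⟨y.2, hx⟩
    · have : {y : Y | (K ∩ {w | w.2 = y.1} ∩ C).Nonempty} =
          Subtype.val ⁻¹' (Prod.snd '' (K ∩ C)) := by
        ext y
        constructor
        · rintro ⟨w, ⟨hw, hwy⟩, hwC⟩
          exact ⟨w, ⟨hw, hwC⟩, hwy⟩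
        · rintro ⟨w, ⟨hw, hwC⟩, hwy⟩
          exact ⟨w, ⟨hw, hwy⟩, hwC⟩
      rw [this]
      exact measurable_subtype_coe
        ((hKc.inter_right hC).image continuous_snd).isClosed.measurableSet
  obtain ⟨G, hG, hs, hc⟩ := MeasCorr.refine_list
    (List.ofFn fun i : Fin n => fun w : (Fin n → ℝ) × (Fin p → ℝ) => w.1 i) (h0.argmin hf) (by
      intro φ hφ
      obtain ⟨i, rfl⟩ := (List.mem_ofFn' _ _).mp hφ
      fun_prop)
  obtain ⟨-, hGne, hGm⟩ := hG
  choose z hz using hGne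
  classical
  refine ⟨fun y => if hy : y ∈ Y then (z ⟨y, hy⟩).1 else 0, ?_, fun y hy => ?_⟩
  · have : (fun y : Y => (if hy : y.1 ∈ Y then (z ⟨y.1, hy⟩).1 else 0)) = fun y => (z y).1 := by
      funext y; simp
    rw [this]
    refine measurable_pi_lambda _ fun i => measurable_of_Iic fun c => ?_
    have h2 : (fun y : Y => (z y).1 i) ⁻¹' Iic c =
        {y | (G y ∩ {w | w.1 i ≤ c}).Nonempty} := by
      ext y
      constructor
      · intro h; exact ⟨z y, hz y, h⟩
      · rintro ⟨w, hw, hwc⟩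
        have := hc (fun w => w.1 i) ((List.mem_ofFn' _ _).mpr ⟨i, rfl⟩) y _ (hz y) w hw
        exact this.le.trans hwc
    rw [h2]
    exact hGm _ (isClosed_le (by fun_prop) continuous_const)
  · simp only [hy, dif_pos]
    obtain ⟨⟨hzK, hzy⟩, hm⟩ := hs _ (hz ⟨y, hy⟩)
    have hzy' : (z ⟨y, hy⟩).2 = y := hzy
    have he : z ⟨y, hy⟩ = ((z ⟨y, hy⟩).1, y) := Prod.ext rfl hzy'
    generalize (z ⟨y, hy⟩).1 = x at he
    rw [he] at hzK hm
    have hx : x ∈ Ky y := by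
      rw [hKy]; rw [hKdef] at hzK; exact hzK.2
    refine ⟨hx, ?_⟩
    rw [hJ]
    refine IsLeast.csInf_eq ⟨⟨x, hx, rfl⟩, ?_⟩
    rintro _ ⟨x', hx', rfl⟩
    refine hm (x', y) ⟨?_, rfl⟩
    rw [hKy] at hx'
    rw [hKdef]
    exact ⟨hy, hx'⟩
end

section
/- Suppose Y ⊂ ℝ^p and K are compact and K_y is nonempty for every y ∈ Y. Then ρ = ∫_Y J(y) dφ(y), and the infimum defining ρ is attained: there exists a finite Borel measure μ* on K with marginal φ on ℝ^p such that ∫_K f dμ* = ρ. -/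
open MeasureTheory Set TopologicalSpace Filter Topology

theorem aux_sel {C Z : Type*} [TopologicalSpace C] [CompactSpace C]
    [MeasurableSpace C] [BorelSpace C] [TopologicalSpace Z] [T2Space Z]
    [MeasurableSpace Z] [BorelSpace Z] (e : C → ℝ) (he : Continuous e)
    (hme : MeasurableEmbedding e) (c0 : C) (F : C → Z) (hF : Continuous F) :
    ∃ s : Z → C, Measurable s ∧ ∀ c, F (s (F c)) = F c := by
  classical
  have key : ∀ z : Z, ∃ c : C, (z ∈ range F → F c = z ∧ ∀ d, F d = z → e c ≤ e d) ∧
      (z ∉ range F → c = c0) := by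
    intro z
    by_cases hz : z ∈ range F
    · have hcl : IsCompact (F ⁻¹' {z}) := (isClosed_singleton.preimage hF).isCompact
      obtain ⟨c, hc, hmin⟩ := hcl.exists_isMinOn (by obtain ⟨c, hc⟩ := hz; exact ⟨c, hc⟩)
        he.continuousOn
      exact ⟨c, fun _ => ⟨hc, fun d hd => hmin hd⟩, fun h => (h hz).elim⟩
    · exact ⟨c0, fun h => (hz h).elim, fun _ => rfl⟩
  choose s hs1 hs2 using key
  refine ⟨s, ?_, fun c => (hs1 (F c) ⟨c, rfl⟩).1⟩
  rw [← hme.measurable_comp_iff]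
  apply measurable_of_Iic
  intro t
  have h1 : MeasurableSet (F '' (e ⁻¹' Iic t)) :=
    ((isClosed_Iic.preimage he).isCompact.image hF).isClosed.measurableSet
  have h2 : MeasurableSet (range F) := (isCompact_range hF).isClosed.measurableSet
  have : (e ∘ s) ⁻¹' Iic t = F '' (e ⁻¹' Iic t) ∪ ((range F)ᶜ ∩ {z | e c0 ≤ t}) := by
    ext z
    by_cases hz : z ∈ range F
    · obtain ⟨ha, hb⟩ := hs1 z hz
      constructor
      · intro h; exact Or.inl ⟨s z, h, ha⟩
      · rintro (⟨d, hd, hdz⟩ | h)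
        · exact (hb d hdz).trans hd
        · exact (h.1 hz).elim
    · have := hs2 z hz
      constructor
      · intro h; refine Or.inr ⟨hz, ?_⟩
        simpa [this] using h
      · rintro (⟨d, hd, hdz⟩ | h)
        · exact (hz ⟨d, hdz⟩).elim
        · simpa [this] using h.2
  rw [this]
  exact h1.union (h2.compl.inter (MeasurableSet.const _))

theorem aux_sel2 {X Z : Type*} [MetricSpace X] [MeasurableSpace X] [BorelSpace X]
    [TopologicalSpace Z] [T2Space Z]
    [MeasurableSpace Z] [BorelSpace Z] (K : Set X) (hK : IsCompact K) (hne : K.Nonempty)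
    (G : X → Z) (hG : Continuous G) :
    ∃ s : Z → X, Measurable s ∧ ∀ x ∈ K, s (G x) ∈ K ∧ G (s (G x)) = G x := by
  haveI : CompactSpace K := isCompact_iff_compactSpace.1 hK
  haveI : Nonempty K := hne.to_subtype
  obtain ⟨σ, hσ, hsurj⟩ := exists_nat_bool_continuous_surjective_of_compact K
  let e : (ℕ → Bool) → ℝ := fun c => (cantorSetHomeomorphNatToBool.symm c : ℝ)
  have he : Continuous e := by fun_prop
  have hinj : Function.Injective e :=
    Subtype.val_injective.comp cantorSetHomeomorphNatToBool.symm.injective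
  have hme : MeasurableEmbedding e := (he.isClosedEmbedding hinj).measurableEmbedding
  obtain ⟨s, hs, hs'⟩ := aux_sel e he hme (fun _ => false) (fun c => G (σ c)) (by fun_prop)
  refine ⟨fun z => σ (s z), ?_, ?_⟩
  · exact measurable_subtype_coe.comp (hσ.measurable.comp hs)
  · intro x hx
    obtain ⟨c, hc⟩ := hsurj ⟨x, hx⟩
    refine ⟨Subtype.coe_prop _, ?_⟩
    have := hs' c
    simpa [hc] using this

/-- `ρ = ∫_Y J dφ` and the infimum defining `ρ` is attained. -/
theorem stmt2 (n p m : ℕ)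
    (Y : Set (Fin p → ℝ)) (hYc : IsCompact Y)
    (f : (Fin n → ℝ) × (Fin p → ℝ) → ℝ) (hf : Continuous f)
    (h : Fin m → (Fin n → ℝ) × (Fin p → ℝ) → ℝ) (hh : ∀ j, Continuous (h j))
    (K : Set ((Fin n → ℝ) × (Fin p → ℝ)))
    (hKdef : K = {w | w.2 ∈ Y ∧ ∀ j, 0 ≤ h j w}) (hKc : IsCompact K)
    (Ky : (Fin p → ℝ) → Set (Fin n → ℝ))
    (hKy : ∀ y, Ky y = {x | ∀ j, 0 ≤ h j (x, y)})
    (hne : ∀ y ∈ Y, (Ky y).Nonempty)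
    (J : (Fin p → ℝ) → ℝ)
    (hJ : ∀ y, J y = sInf ((fun x => f (x, y)) '' Ky y))
    (φ : Measure (Fin p → ℝ)) [IsProbabilityMeasure φ] (hφY : φ Yᶜ = 0)
    (ρ : ℝ)
    (hρ : ρ = sInf {r | ∃ μ : Measure ((Fin n → ℝ) × (Fin p → ℝ)),
      IsFiniteMeasure μ ∧ μ Kᶜ = 0 ∧ μ.map Prod.snd = φ ∧ r = ∫ w in K, f w ∂μ}) :
    ρ = ∫ y in Y, J y ∂φ ∧
    ∃ μ : Measure ((Fin n → ℝ) × (Fin p → ℝ)),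
      IsFiniteMeasure μ ∧ μ Kᶜ = 0 ∧ μ.map Prod.snd = φ ∧ ∫ w in K, f w ∂μ = ρ := by
  have hmemK : ∀ x y, (x, y) ∈ K ↔ y ∈ Y ∧ x ∈ Ky y := by
    intro x y; rw [hKdef, hKy]; rfl
  have hYm : MeasurableSet Y := hYc.isClosed.measurableSet
  have hKm : MeasurableSet K := hKc.isClosed.measurableSet
  have haeY : ∀ᵐ y ∂φ, y ∈ Y := hφY
  have hYne : Y.Nonempty := by
    obtain ⟨y, hy⟩ := haeY.exists
    exact ⟨y, hy⟩
  have hKne : K.Nonempty := by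
    obtain ⟨y, hy⟩ := hYne
    obtain ⟨x, hx⟩ := hne y hy
    exact ⟨(x, y), (hmemK x y).2 ⟨hy, hx⟩⟩
  -- minimizers
  have hmin : ∀ y ∈ Y, ∃ x ∈ Ky y, f (x, y) = J y ∧ ∀ x' ∈ Ky y, J y ≤ f (x', y) := by
    intro y hy
    have hc : IsCompact (K ∩ Prod.snd ⁻¹' {y}) :=
      hKc.inter_right (isClosed_singleton.preimage continuous_snd)
    obtain ⟨x0, hx0⟩ := hne y hy
    obtain ⟨⟨x, y'⟩, ⟨hw, hwy⟩, hm⟩ := hc.exists_isMinOn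
      ⟨(x0, y), (hmemK _ _).2 ⟨hy, hx0⟩, rfl⟩ hf.continuousOn
    obtain rfl : y' = y := hwy
    have hx := ((hmemK _ _).1 hw).2
    have hle : ∀ x' ∈ Ky y', f (x, y') ≤ f (x', y') := fun x' hx' =>
      hm (show (x', y') ∈ _ from ⟨(hmemK _ _).2 ⟨hy, hx'⟩, rfl⟩)
    have hl : IsLeast ((fun x => f (x, y')) '' Ky y') (f (x, y')) := by
      refine ⟨⟨x, hx, rfl⟩, ?_⟩
      rintro _ ⟨x', hx', rfl⟩
      exact hle x' hx'
    have hE : f (x, y') = J y' := by rw [hJ, hl.csInf_eq]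
    exact ⟨x, hx, hE, fun x' hx' => hE ▸ hle x' hx'⟩
  -- measurable version of J
  let J' : (Fin p → ℝ) → ℝ := Y.indicator J
  have hJ'Y : ∀ y ∈ Y, J' y = J y := fun y hy => indicator_of_mem hy J
  have hJ'm : Measurable J' := by
    apply measurable_of_Iic
    intro t
    have h1 : MeasurableSet (Prod.snd '' (K ∩ f ⁻¹' Iic t)) :=
      ((hKc.inter_right (isClosed_Iic.preimage hf)).image continuous_snd).isClosed.measurableSet
    have : J' ⁻¹' Iic t = Prod.snd '' (K ∩ f ⁻¹' Iic t) ∪ (Yᶜ ∩ {y | (0:ℝ) ≤ t}) := by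
      ext y
      by_cases hy : y ∈ Y
      · obtain ⟨x, hx, hxJ, hxm⟩ := hmin y hy
        have := hJ'Y y hy
        constructor
        · intro hle
          have hle' : J' y ≤ t := hle
          refine Or.inl ⟨(x, y), ⟨(hmemK _ _).2 ⟨hy, hx⟩, ?_⟩, rfl⟩
          show f (x, y) ≤ t
          linarith
        · rintro (⟨⟨x', y'⟩, ⟨hk, hle⟩, hyy⟩ | hn)
          · obtain rfl : y' = y := hyy
            have hle' : f (x', y') ≤ t := hle
            have := hxm x' ((hmemK _ _).1 hk).2
            show J' y' ≤ t
            linarith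
          · exact (hn.1 hy).elim
      · have hz : J' y = 0 := indicator_of_notMem hy J
        constructor
        · intro hle
          have hle' : J' y ≤ t := hle
          exact Or.inr ⟨hy, by rwa [hz] at hle'⟩
        · rintro (⟨⟨x', y'⟩, ⟨hk, hle⟩, hyy⟩ | hn)
          · obtain rfl : y' = y := hyy
            exact (hy ((hmemK _ _).1 hk).1).elim
          · show J' y ≤ t
            rw [hz]; exact hn.2
    rw [this]
    exact h1.union (hYm.compl.inter (MeasurableSet.const _))
  have hint : ∫ y in Y, J y ∂φ = ∫ y, J' y ∂φ := (integral_indicator hYm).symm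
  obtain ⟨s, hsm, hs⟩ := aux_sel2 K hKc hKne (fun w => (f w, w.2)) (by fun_prop)
  let T : (Fin p → ℝ) → (Fin n → ℝ) × (Fin p → ℝ) := fun y => s (J' y, y)
  have hTm : Measurable T := hsm.comp (hJ'm.prodMk measurable_id)
  have hT : ∀ y ∈ Y, T y ∈ K ∧ f (T y) = J' y ∧ (T y).2 = y := by
    intro y hy
    obtain ⟨x, hx, hxJ, -⟩ := hmin y hy
    have := hs (x, y) ((hmemK _ _).2 ⟨hy, hx⟩)
    simp only [hxJ, ← hJ'Y y hy, Prod.mk.injEq] at this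
    exact this
  obtain ⟨B, hB⟩ := hKc.exists_bound_of_continuousOn hf.continuousOn
  have hJ'int : Integrable J' φ := by
    refine Integrable.of_bound hJ'm.aestronglyMeasurable B ?_
    filter_upwards [haeY] with y hy
    rw [← (hT y hy).2.1]
    exact hB _ (hT y hy).1
  have hrestr : ∀ μ : Measure ((Fin n → ℝ) × (Fin p → ℝ)), μ Kᶜ = 0 →
      ∫ w in K, f w ∂μ = ∫ w, f w ∂μ := by
    intro μ hμ
    rw [Measure.restrict_eq_self_of_ae_mem (show ∀ᵐ w ∂μ, w ∈ K from hμ)]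
  let μs := φ.map T
  have hμK : μs Kᶜ = 0 := by
    rw [Measure.map_apply hTm hKm.compl]
    have : ∀ᵐ y ∂φ, T y ∈ K := haeY.mono fun y hy => (hT y hy).1
    exact this
  have hμφ : μs.map Prod.snd = φ := by
    rw [Measure.map_map measurable_snd hTm]
    conv_rhs => rw [← Measure.map_id (μ := φ)]
    exact Measure.map_congr (haeY.mono fun y hy => (hT y hy).2.2)
  have hμint : ∫ w in K, f w ∂μs = ∫ y, J' y ∂φ := by
    rw [hrestr _ hμK, integral_map hTm.aemeasurable hf.aestronglyMeasurable]
    exact integral_congr_ae (haeY.mono fun y hy => (hT y hy).2.1)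
  have hμfin : IsFiniteMeasure μs := by infer_instance
  have hleast : IsLeast {r | ∃ μ : Measure ((Fin n → ℝ) × (Fin p → ℝ)),
      IsFiniteMeasure μ ∧ μ Kᶜ = 0 ∧ μ.map Prod.snd = φ ∧ r = ∫ w in K, f w ∂μ}
      (∫ y, J' y ∂φ) := by
    refine ⟨⟨μs, hμfin, hμK, hμφ, hμint.symm⟩, ?_⟩
    rintro r ⟨μ, hfin, hK0, hmap, rfl⟩
    have hae : ∀ᵐ w ∂μ, w ∈ K := hK0
    rw [hrestr μ hK0]
    have h1 : ∫ y, J' y ∂φ = ∫ w, J' w.2 ∂μ := by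
      rw [← hmap, integral_map measurable_snd.aemeasurable hJ'm.aestronglyMeasurable]
    rw [h1]
    have hi : Integrable (fun w : (Fin n → ℝ) × (Fin p → ℝ) => J' w.2) μ := by
      rw [← hmap] at hJ'int
      exact hJ'int.comp_measurable measurable_snd
    refine integral_mono_ae hi
      (Integrable.of_bound hf.aestronglyMeasurable B (hae.mono fun w hw => hB w hw)) ?_
    filter_upwards [hae] with w hw
    obtain ⟨x, y⟩ := w
    obtain ⟨hy, hx⟩ := (hmemK x y).1 hw
    obtain ⟨_, _, _, hm⟩ := hmin y hy
    show J' y ≤ f (x, y)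
    rw [hJ'Y y hy]
    exact hm x hx
  have hρ' : ρ = ∫ y, J' y ∂φ := by rw [hρ, hleast.csInf_eq]
  exact ⟨by rw [hρ', hint], μs, hμfin, hμK, hμφ, by rw [hμint, hρ']⟩
end

section
/- Suppose Y ⊂ ℝ^p and K are compact and K_y is nonempty for every y ∈ Y. Let μ* be any measure attaining ρ, i.e. a finite Borel measure on K with marginal φ on ℝ^p and ∫_K f dμ* = ρ. Then there exists a stochastic kernel ψ*(dx | y) (a Borel measurable family of probability measures on ℝ^n indexed by y ∈ Y) such that ψ*(X*_y | y) = 1 for φ-almost all y ∈ Y and μ*(C × B) = ∫_{B∩Y} ψ*(C ∩ X*_y | y) dφ(y) for all Borel sets C ⊂ ℝ^n and B ⊂ ℝ^p. -/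
open MeasureTheory Set TopologicalSpace Filter Topology

/-- measurable selection of minimizers over the fibres of a compact set -/
theorem exists_measurable_argmin {α β : Type*} [MetricSpace α] [MeasurableSpace α] [BorelSpace α]
    [SecondCountableTopology α]
    [MetricSpace β] [MeasurableSpace β] [BorelSpace β]
    (K : Set (α × β)) (hK : IsCompact K) (hKne : K.Nonempty)
    (Y : Set β) (hY : IsCompact Y) (hne : ∀ y ∈ Y, ∃ x, (x, y) ∈ K)
    (f : α × β → ℝ) (hf : Continuous f) :
    ∃ s : β → α, Measurable s ∧ ∀ y ∈ Y, (s y, y) ∈ K ∧ ∀ x, (x, y) ∈ K → f (s y, y) ≤ f (x, y) := by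
  classical
  have : CompactSpace K := isCompact_iff_compactSpace.1 hK
  have : Nonempty K := hKne.to_subtype
  obtain ⟨g, hgc, hgs⟩ := exists_nat_bool_continuous_surjective_of_compact K
  let ι : (ℕ → Bool) → ℝ := fun e => (cantorSetHomeomorphNatToBool.symm e : ℝ)
  have hιc : Continuous ι := by fun_prop
  have hιi : Function.Injective ι := fun a b hab =>
    cantorSetHomeomorphNatToBool.symm.injective (Subtype.ext hab)
  have hιm : MeasurableEmbedding ι := (hιc.isClosedEmbedding hιi).measurableEmbedding
  let P : (ℕ → Bool) → β := fun e => (g e).1.2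
  let F : (ℕ → Bool) → ℝ := fun e => f (g e).1
  have hP : Continuous P := by fun_prop
  have hF : Continuous F := by fun_prop
  have key : ∀ y ∈ Y, ∃ e, P e = y ∧ (∀ e', P e' = y → F e ≤ F e') ∧
      ∀ e', P e' = y → F e' ≤ F e → ι e ≤ ι e' := by
    intro y hy
    obtain ⟨x, hx⟩ := hne y hy
    obtain ⟨e0, he0⟩ := hgs ⟨_, hx⟩
    have h1 : IsClosed {e | P e = y} := isClosed_eq hP continuous_const
    obtain ⟨e1, he1, hmin1⟩ := h1.isCompact.exists_isMinOn
      ⟨e0, by simp [P, he0]⟩ hF.continuousOn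
    have h2 : IsClosed {e | P e = y ∧ F e ≤ F e1} :=
      h1.inter (isClosed_le hF continuous_const)
    obtain ⟨e2, he2, hmin2⟩ := h2.isCompact.exists_isMinOn
      ⟨e1, he1, le_rfl⟩ hιc.continuousOn
    refine ⟨e2, he2.1, fun e' he' => he2.2.trans (hmin1 he'), fun e' he' hle => ?_⟩
    exact hmin2 ⟨he', hle.trans he2.2⟩
  choose! e he1 he2 he3 using key
  let e' : β → (ℕ → Bool) := fun y => if y ∈ Y then e y else fun _ => false
  have hset : ∀ c : ℝ, {y | y ∈ Y ∧ ι (e y) ≤ c} =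
      Y ∩ ⋂ q : ℚ, ((P '' {a | F a ≤ q})ᶜ ∪ P '' {a | F a ≤ q ∧ ι a ≤ c}) := by
    intro c
    ext y
    simp only [mem_ofPred_eq, mem_inter_iff, mem_iInter, mem_union, mem_compl_iff]
    refine and_congr_right fun hy => ⟨fun hc q => ?_, fun hq => ?_⟩
    · by_cases hh : y ∈ P '' {a | F a ≤ q}
      · right
        obtain ⟨a, ha, hay⟩ := hh
        exact ⟨e y, ⟨(he2 y hy a hay).trans ha, hc⟩, he1 y hy⟩
      · exact Or.inl hh
    · have hq' : ∀ q : ℚ, F (e y) ≤ q → ∃ a, P a = y ∧ ι a ≤ c ∧ F a ≤ q := by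
        intro q hFq
        rcases hq q with h | ⟨a, ha, hay⟩
        · exact absurd ⟨e y, hFq, he1 y hy⟩ h
        · exact ⟨a, hay, ha.2, ha.1⟩
      have h1 : IsClosed {a | P a = y ∧ ι a ≤ c} :=
        (isClosed_eq hP continuous_const).inter (isClosed_le hιc continuous_const)
      obtain ⟨q0, hq0⟩ := exists_rat_gt (F (e y))
      obtain ⟨a0, ha0, ha0', -⟩ := hq' q0 hq0.le
      obtain ⟨a, ha, hmin⟩ := h1.isCompact.exists_isMinOn ⟨a0, ha0, ha0'⟩ hF.continuousOn
      have : F a ≤ F (e y) := by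
        by_contra hlt
        push Not at hlt
        obtain ⟨q, hq1, hq2⟩ := exists_rat_btwn hlt
        obtain ⟨b, hb1, hb2, hb3⟩ := hq' q hq1.le
        have : F a ≤ F b := hmin ⟨hb1, hb2⟩
        linarith
      exact (he3 y hy a ha.1 this).trans ha.2
  have hmeas : ∀ c : ℝ, MeasurableSet {y | y ∈ Y ∧ ι (e y) ≤ c} := by
    intro c
    rw [hset]
    refine hY.measurableSet.inter (MeasurableSet.iInter fun q => ?_)
    have h1 : IsClosed {a | F a ≤ (q : ℝ)} := isClosed_le hF continuous_const
    have h2 : IsClosed {a | F a ≤ (q : ℝ) ∧ ι a ≤ c} :=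
      h1.inter (isClosed_le hιc continuous_const)
    exact ((h1.isCompact.image hP).measurableSet.compl).union (h2.isCompact.image hP).measurableSet
  have he'm : Measurable e' := by
    rw [← hιm.measurable_comp_iff]
    refine measurable_of_Iic fun c => ?_
    have : (ι ∘ e') ⁻¹' Iic c = {y | y ∈ Y ∧ ι (e y) ≤ c} ∪
        (Yᶜ ∩ {_y | ι (fun _ => false) ≤ c}) := by
      ext y
      by_cases hy : y ∈ Y <;> simp [e', hy]
    rw [this]
    exact (hmeas c).union (hY.measurableSet.compl.inter (MeasurableSet.const _))
  refine ⟨fun y => (g (e' y)).1.1, ?_, fun y hy => ?_⟩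
  · have : Continuous fun a => (g a).1.1 := by fun_prop
    exact this.measurable.comp he'm
  · have h0 : e' y = e y := by simp [e', hy]
    have h1 : ((g (e' y)).1.1, y) = (g (e y)).1 := by
      rw [h0]; exact Prod.ext rfl (he1 y hy).symm
    simp only [h1]
    refine ⟨(g (e y)).2, fun x hx => ?_⟩
    obtain ⟨a, ha⟩ := hgs ⟨_, hx⟩
    have := he2 y hy a (by simp [P, ha])
    simpa [F, ha] using this

/-- disintegration of any optimal solution `μ*` of `P` via a stochastic
kernel `ψ*` concentrated on the sets of minimizers `X*_y`. -/
theorem stmt3 (n p m : ℕ)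
    (Y : Set (Fin p → ℝ)) (hYc : IsCompact Y)
    (f : (Fin n → ℝ) × (Fin p → ℝ) → ℝ) (hf : Continuous f)
    (h : Fin m → (Fin n → ℝ) × (Fin p → ℝ) → ℝ) (hh : ∀ j, Continuous (h j))
    (K : Set ((Fin n → ℝ) × (Fin p → ℝ)))
    (hKdef : K = {w | w.2 ∈ Y ∧ ∀ j, 0 ≤ h j w}) (hKc : IsCompact K)
    (Ky : (Fin p → ℝ) → Set (Fin n → ℝ))
    (hKy : ∀ y, Ky y = {x | ∀ j, 0 ≤ h j (x, y)})
    (hne : ∀ y ∈ Y, (Ky y).Nonempty)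
    (J : (Fin p → ℝ) → ℝ)
    (hJ : ∀ y, J y = sInf ((fun x => f (x, y)) '' Ky y))
    (Xstar : (Fin p → ℝ) → Set (Fin n → ℝ))
    (hXs : ∀ y, Xstar y = {x ∈ Ky y | f (x, y) = J y})
    (φ : Measure (Fin p → ℝ)) [IsProbabilityMeasure φ] (hφY : φ Yᶜ = 0)
    (ρ : ℝ)
    (hρ : ρ = sInf {r | ∃ μ : Measure ((Fin n → ℝ) × (Fin p → ℝ)),
      IsFiniteMeasure μ ∧ μ Kᶜ = 0 ∧ μ.map Prod.snd = φ ∧ r = ∫ w in K, f w ∂μ})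
    (μstar : Measure ((Fin n → ℝ) × (Fin p → ℝ))) (hμfin : IsFiniteMeasure μstar)
    (hμK : μstar Kᶜ = 0) (hμmarg : μstar.map Prod.snd = φ)
    (hμopt : ∫ w in K, f w ∂μstar = ρ) :
    ∃ ψ : (Fin p → ℝ) → Measure (Fin n → ℝ),
      (∀ y, IsProbabilityMeasure (ψ y)) ∧
      (∀ C : Set (Fin n → ℝ), MeasurableSet C → Measurable (fun y => ψ y C)) ∧
      (∀ᵐ y ∂φ, ψ y (Xstar y) = 1) ∧
      (∀ (C : Set (Fin n → ℝ)) (B : Set (Fin p → ℝ)), MeasurableSet C → MeasurableSet B →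
        μstar (C ×ˢ B) = ∫⁻ y in B ∩ Y, ψ y (C ∩ Xstar y) ∂φ) := by
  have hKm : MeasurableSet K := hKc.measurableSet
  have hYne : Y.Nonempty := by
    rw [nonempty_iff_ne_empty]
    rintro rfl
    simp at hφY
  have hKne' : ∀ y ∈ Y, ∃ x, (x, y) ∈ K := by
    intro y hy
    obtain ⟨x, hx⟩ := hne y hy
    rw [hKy] at hx
    exact ⟨x, by rw [hKdef]; exact ⟨hy, hx⟩⟩
  have hKne : K.Nonempty := by
    obtain ⟨y, hy⟩ := hYne
    obtain ⟨x, hx⟩ := hKne' y hy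
    exact ⟨_, hx⟩
  obtain ⟨s, hs, hsmin⟩ := exists_measurable_argmin K hKc hKne Y hYc hKne' f hf
  have hKY : ∀ w ∈ K, w.2 ∈ Y := fun w hw => by rw [hKdef] at hw; exact hw.1
  have hJs : ∀ y ∈ Y, J y = f (s y, y) := by
    intro y hy
    rw [hJ]
    have hmem : ∀ x, x ∈ Ky y ↔ (x, y) ∈ K := by
      intro x; rw [hKy, hKdef]; simp [hy]
    refine IsLeast.csInf_eq ⟨⟨s y, (hmem _).2 (hsmin y hy).1, rfl⟩, ?_⟩
    rintro _ ⟨x, hx, rfl⟩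
    exact (hsmin y hy).2 x ((hmem x).1 hx)
  obtain ⟨M, hM⟩ := hKc.exists_bound_of_continuousOn hf.continuousOn
  have haeY : ∀ᵐ y ∂φ, y ∈ Y := by rw [ae_iff]; exact hφY
  have haeK : ∀ᵐ w ∂μstar, w ∈ K := by rw [ae_iff]; exact hμK
  have hfint : Integrable f μstar :=
    Integrable.of_bound hf.aestronglyMeasurable M (by filter_upwards [haeK] with w hw using hM w hw)
  have hsm : Measurable fun y => (s y, y) := hs.prodMk measurable_id
  let G : (Fin p → ℝ) → ℝ := fun y => f (s y, y)
  have hGm : Measurable G := hf.measurable.comp hsm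
  have hGint : Integrable (fun w => G w.2) μstar :=
    Integrable.of_bound (hGm.comp measurable_snd).aestronglyMeasurable M
      (by filter_upwards [haeK] with w hw using hM _ (hsmin _ (hKY w hw)).1)
  have hle : ∫ w, f w ∂μstar ≤ ∫ w, G w.2 ∂μstar := by
    have e1 : ∫ w, G w.2 ∂μstar = ∫ y, G y ∂φ := by
      rw [← hμmarg, integral_map measurable_snd.aemeasurable hGm.aestronglyMeasurable]
    have e2 : ∫ w in K, f w ∂μstar = ∫ w, f w ∂μstar := by
      rw [Measure.restrict_eq_self_of_ae_mem haeK]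
    rw [← e2, hμopt, e1, hρ]
    refine csInf_le ⟨-M, ?_⟩ ⟨φ.map fun y => (s y, y), inferInstance, ?_, ?_, ?_⟩
    · rintro r ⟨μ, hμ, hμ1, hμ2, rfl⟩
      have haμ : ∀ᵐ w ∂μ, w ∈ K := by rw [ae_iff]; exact hμ1
      have : IsProbabilityMeasure μ := by
        constructor
        rw [← measure_univ (μ := φ), ← hμ2, Measure.map_apply measurable_snd MeasurableSet.univ]
        simp
      rw [Measure.restrict_eq_self_of_ae_mem haμ]
      have := norm_integral_le_of_norm_le_const (μ := μ) (f := f) (C := M)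
        (by filter_upwards [haμ] with w hw using hM w hw)
      simp at this
      exact (abs_le.1 this).1
    · rw [Measure.map_apply hsm hKm.compl]
      refine measure_mono_null (t := Yᶜ) ?_ hφY
      intro y hy
      rw [mem_compl_iff]
      intro hyY
      exact hy (hsmin y hyY).1
    · rw [Measure.map_map measurable_snd hsm]
      exact Measure.map_id
    · have haμ : ∀ᵐ w ∂(φ.map fun y => (s y, y)), w ∈ K := by
        refine (ae_map_iff (p := fun w => w ∈ K) hsm.aemeasurable hKm).2 ?_
        filter_upwards [haeY] with y hy using (hsmin y hy).1
      rw [Measure.restrict_eq_self_of_ae_mem haμ,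
        integral_map hsm.aemeasurable hf.aestronglyMeasurable]
  have hnn : ∀ᵐ w ∂μstar, 0 ≤ f w - G w.2 := by
    filter_upwards [haeK] with w hw
    exact sub_nonneg.2 ((hsmin w.2 (hKY w hw)).2 w.1 hw)
  have hzero : ∀ᵐ w ∂μstar, f w - G w.2 = 0 := by
    refine (integral_eq_zero_iff_of_nonneg_ae hnn (hfint.sub hGint)).1 ?_
    refine le_antisymm ?_ (integral_nonneg_of_ae hnn)
    rw [integral_sub hfint hGint]
    linarith
  have hX : ∀ᵐ w ∂μstar, w.1 ∈ Xstar w.2 := by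
    filter_upwards [haeK, hzero] with w hw h0
    rw [hXs]
    refine ⟨?_, ?_⟩
    · rw [hKy]; rw [hKdef] at hw; exact hw.2
    · rw [hJs _ (hKY w hw)]
      exact sub_eq_zero.1 h0
  -- disintegration
  let ν : Measure ((Fin p → ℝ) × (Fin n → ℝ)) := μstar.map Prod.swap
  have hνfst : ν.fst = φ := by
    rw [Measure.fst, Measure.map_map measurable_fst measurable_swap]
    exact hμmarg
  have hdis : Measure.compProd φ ν.condKernel = ν := by
    rw [← hνfst]; exact ν.disintegrate ν.condKernel
  have hXν : ∀ᵐ v ∂ν, v.2 ∈ Xstar v.1 := by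
    have hem : MeasurableEmbedding (Prod.swap : (Fin n → ℝ) × (Fin p → ℝ) → _) :=
      MeasurableEquiv.prodComm.measurableEmbedding
    rw [hem.ae_map_iff]
    exact hX
  rw [← hdis] at hXν
  have hψX := Measure.ae_ae_of_ae_compProd hXν
  have hXm : ∀ y, MeasurableSet (Xstar y) := by
    intro y
    rw [hXs, hKy]
    have h1 : IsClosed {x | ∀ j, 0 ≤ h j (x, y)} := by
      simp only [ofPred_forall]
      exact isClosed_iInter fun j =>
        isClosed_le continuous_const ((hh j).comp (by fun_prop))
    exact (h1.inter (isClosed_eq (hf.comp (by fun_prop)) continuous_const)).measurableSet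
  refine ⟨fun y => ν.condKernel y, fun y => inferInstance,
    fun C hC => ν.condKernel.measurable_coe hC, ?_, ?_⟩
  · filter_upwards [hψX] with y hy
    rw [← prob_compl_eq_zero_iff (hXm y)]
    exact hy
  · intro C B hC hB
    have h1 : μstar (C ×ˢ B) = ν (B ×ˢ C) := by
      rw [Measure.map_apply measurable_swap (hB.prod hC), preimage_swap_prod]
    have h3 : ν (B ×ˢ C) = ∫⁻ y in B, ν.condKernel y C ∂φ := by
      rw [← Measure.compProd_apply_prod hB hC, hdis]
    rw [h1, h3]
    have h2 : φ.restrict (B ∩ Y) = φ.restrict B := by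
      refine Measure.restrict_congr_set ?_
      filter_upwards [haeY] with y hy
      exact propext ⟨fun h => h.1, fun h => ⟨h, hy⟩⟩
    rw [h2]
    refine lintegral_congr_ae (ae_restrict_of_ae ?_)
    filter_upwards [hψX] with y hy
    refine measure_congr ?_
    filter_upwards [hy] with x hx
    exact propext ⟨fun h => ⟨h, hx⟩, fun h => h.1⟩
end

section
/- Suppose Y ⊂ ℝ^p and K are compact, K_y is nonempty for every y ∈ Y, and for φ-almost all y ∈ Y the set X*_y is a singleton {x*(y)}. Then there exists a Borel measurable mapping g : Y → ℝ^n with g(y) ∈ K_y for all y, g(y) = x*(y) for φ-almost every y ∈ Y, ρ = ∫_Y f(g(y), y) dφ(y), and for every measure μ* attaining ρ and every α ∈ ℕ^n, β ∈ ℕ^p one has ∫_K x^α y^β dμ*(x,y) = ∫_Y y^β g(y)^α dφ(y). -/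
open MeasureTheory Set TopologicalSpace Filter Topology

/-- The graph `C` has compact sections, nonempty over `Y`, and measurable hit sets. -/
def GoodGraph {E P : Type*} [TopologicalSpace E] [TopologicalSpace P] [MeasurableSpace P]
    (Y : Set P) (C : Set (E × P)) : Prop :=
  (∀ F : Set (E × P), IsClosed F → MeasurableSet (Prod.snd '' (C ∩ F))) ∧
  (∀ y, IsCompact {x | (x, y) ∈ C}) ∧ (∀ y ∈ Y, ∃ x, (x, y) ∈ C) ∧ (∀ w ∈ C, w.2 ∈ Y)

theorem goodGraph_step {E P : Type*} [TopologicalSpace E] [T2Space E] [TopologicalSpace P]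
    [MeasurableSpace P]
    (Y : Set P) (C : Set (E × P)) (hC : GoodGraph Y C) (u : E × P → ℝ) (hu : Continuous u) :
    GoodGraph Y {w | w ∈ C ∧ ∀ x', (x', w.2) ∈ C → u w ≤ u (x', w.2)} := by
  obtain ⟨h1, h2, h3, h4⟩ := hC
  have hcont : ∀ y, Continuous fun x : E => u (x, y) := fun y => by fun_prop
  refine ⟨fun F hF => ?_, fun y => ?_, fun y hy => ?_, fun w hw => h4 w hw.1⟩
  · have key : Prod.snd '' ({w | w ∈ C ∧ ∀ x', (x', w.2) ∈ C → u w ≤ u (x', w.2)} ∩ F)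
        = (Prod.snd '' (C ∩ F)) \ ⋃ q : ℚ, ((Prod.snd '' (C ∩ {w | u w ≤ q})) \
            (Prod.snd '' (C ∩ (F ∩ {w | u w ≤ q})))) := by
      ext y
      constructor
      · rintro ⟨⟨x, y'⟩, ⟨⟨hxC, hmin⟩, hxF⟩, rfl⟩
        refine ⟨⟨_, ⟨hxC, hxF⟩, rfl⟩, ?_⟩
        simp only [mem_iUnion, not_exists]
        rintro q ⟨⟨⟨x', y''⟩, ⟨hx'C, hx'q⟩, hy⟩, hno⟩
        dsimp at hy
        subst hy
        exact hno ⟨_, ⟨hxC, hxF, (hmin x' hx'C).trans hx'q⟩, rfl⟩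
      · rintro ⟨⟨⟨x0, y'⟩, ⟨hx0C, hx0F⟩, rfl⟩, hno⟩
        dsimp at hno ⊢
        have hFc : IsCompact ({x | (x, y') ∈ C} ∩ {x | (x, y') ∈ F}) :=
          (h2 y').inter_right (hF.preimage (by fun_prop : Continuous fun x : E => (x, y')))
        obtain ⟨x1, ⟨hx1C, hx1F⟩, hx1⟩ := hFc.exists_isMinOn ⟨x0, hx0C, hx0F⟩
          (hcont y').continuousOn
        refine ⟨(x1, y'), ⟨⟨hx1C, fun x' hx' => ?_⟩, hx1F⟩, rfl⟩
        by_contra hlt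
        push Not at hlt
        obtain ⟨q, hq1, hq2⟩ := exists_rat_btwn hlt
        apply hno
        refine mem_iUnion.2 ⟨q, ⟨(x', y'), ⟨hx', hq1.le⟩, rfl⟩, ?_⟩
        rintro ⟨⟨x2, y2⟩, ⟨hx2C, hx2F, hx2q⟩, hy⟩
        dsimp at hy
        subst hy
        have := isMinOn_iff.1 hx1 x2 ⟨hx2C, hx2F⟩
        have h5 : u (x2, y2) ≤ q := hx2q
        linarith
    rw [key]
    refine (h1 F hF).diff (MeasurableSet.iUnion fun q => ?_)
    have hq : IsClosed {w | u w ≤ (q : ℝ)} := isClosed_le hu continuous_const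
    exact (h1 _ hq).diff (h1 _ (hF.inter hq))
  · have : {x | (x, y) ∈ {w | w ∈ C ∧ ∀ x', (x', w.2) ∈ C → u w ≤ u (x', w.2)}}
        = {x | (x, y) ∈ C} ∩ ⋂ x' : {x' // (x', y) ∈ C}, {x | u (x, y) ≤ u (x'.1, y)} := by
      ext x; simp
    rw [this]
    exact (h2 y).inter_right (isClosed_iInter fun x' => isClosed_le (hcont y) continuous_const)
  · obtain ⟨x, hx, hmin⟩ := (h2 y).exists_isMinOn (h3 y hy) (hcont y).continuousOn
    exact ⟨x, hx, fun x' hx' => isMinOn_iff.1 hmin x' hx'⟩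

theorem goodGraph_list {E P : Type*} [TopologicalSpace E] [T2Space E] [TopologicalSpace P]
    [MeasurableSpace P] (Y : Set P) (l : List (E × P → ℝ)) :
    ∀ (C : Set (E × P)), GoodGraph Y C → (∀ u ∈ l, Continuous u) →
    ∃ D ⊆ C, GoodGraph Y D ∧
      ∀ u ∈ l, ∀ x x' y, (x, y) ∈ D → (x', y) ∈ D → u (x, y) = u (x', y) := by
  induction l with
  | nil => exact fun C hC _ => ⟨C, Subset.rfl, hC, by simp⟩
  | cons u l ih =>
    intro C hC hl
    obtain ⟨D, hDC, hD, hDu⟩ := ih _ (goodGraph_step Y C hC u (hl u (by simp)))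
      (fun v hv => hl v (by simp [hv]))
    refine ⟨D, fun w hw => (hDC hw).1, hD, fun v hv x x' y hx hx' => ?_⟩
    rcases List.mem_cons.1 hv with rfl | hv
    · exact le_antisymm ((hDC hx).2 x' (hDC hx').1) ((hDC hx').2 x (hDC hx).1)
    · exact hDu v hv x x' y hx hx'

theorem goodGraph_of_compact {E P : Type*} [TopologicalSpace E] [T2Space E] [TopologicalSpace P]
    [T2Space P] [MeasurableSpace P] [BorelSpace P] (Y : Set P) (K : Set (E × P))
    (hK : IsCompact K) (h3 : ∀ y ∈ Y, ∃ x, (x, y) ∈ K) (h4 : ∀ w ∈ K, w.2 ∈ Y) :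
    GoodGraph Y K := by
  refine ⟨fun F hF => ((hK.inter_right hF).image continuous_snd).measurableSet, fun y => ?_,
    h3, h4⟩
  have : {x | (x, y) ∈ K} = Prod.fst '' (K ∩ {w | w.2 = y}) := by
    ext x
    constructor
    · exact fun hx => ⟨(x, y), ⟨hx, rfl⟩, rfl⟩
    · rintro ⟨⟨x, y⟩, ⟨hx, rfl⟩, rfl⟩; exact hx
  rw [this]
  exact (hK.inter_right (isClosed_eq continuous_snd continuous_const)).image continuous_fst

/-- Measurable argmin selection. -/
theorem exists_selector {n p : ℕ} (Y : Set (Fin p → ℝ)) (hY : MeasurableSet Y)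
    (K : Set ((Fin n → ℝ) × (Fin p → ℝ))) (hK : IsCompact K)
    (h3 : ∀ y ∈ Y, ∃ x, (x, y) ∈ K) (h4 : ∀ w ∈ K, w.2 ∈ Y)
    (f : (Fin n → ℝ) × (Fin p → ℝ) → ℝ) (hf : Continuous f) :
    ∃ g : (Fin p → ℝ) → (Fin n → ℝ), Measurable g ∧ (∀ y ∈ Y, (g y, y) ∈ K) ∧
      ∀ y ∈ Y, ∀ x, (x, y) ∈ K → f (g y, y) ≤ f (x, y) := by
  classical
  obtain ⟨D, hDC, ⟨h1, -, hD3, hD4⟩, hDu⟩ := goodGraph_list Y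
    (List.ofFn fun k : Fin n => fun w : (Fin n → ℝ) × (Fin p → ℝ) => w.1 k) _
    (goodGraph_step Y K (goodGraph_of_compact Y K hK h3 h4) f hf) (by
      intro u hu
      obtain ⟨k, rfl⟩ := (List.mem_ofFn' _ _).1 hu
      fun_prop)
  have huniq : ∀ x x' y, (x, y) ∈ D → (x', y) ∈ D → x = x' := fun x x' y hx hx' => by
    ext k
    exact hDu _ ((List.mem_ofFn' _ _).2 ⟨k, rfl⟩) x x' y hx hx'
  let g : (Fin p → ℝ) → (Fin n → ℝ) := fun y => if hy : y ∈ Y then (hD3 y hy).choose else 0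
  have hg : ∀ y ∈ Y, (g y, y) ∈ D := fun y hy => by
    simp only [g, hy, dif_pos]
    exact (hD3 y hy).choose_spec
  refine ⟨g, measurable_of_isClosed fun F hF => ?_, fun y hy => (hDC (hg y hy)).1,
    fun y hy x hx => (hDC (hg y hy)).2 x hx⟩
  have : g ⁻¹' F = (Prod.snd '' (D ∩ Prod.fst ⁻¹' F)) ∪ (Yᶜ ∩ {y | (0 : Fin n → ℝ) ∈ F}) := by
    ext y
    by_cases hy : y ∈ Y
    · simp only [mem_preimage, mem_union, mem_inter_iff, mem_compl_iff, hy, not_true, false_and,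
        or_false]
      constructor
      · exact fun hF => ⟨(g y, y), ⟨hg y hy, hF⟩, rfl⟩
      · rintro ⟨⟨x, y⟩, ⟨hx, hxF⟩, rfl⟩
        rw [huniq _ _ _ (hg y hy) hx]; exact hxF
    · have : g y = 0 := by simp [g, hy]
      simp only [mem_preimage, mem_union, mem_inter_iff, mem_compl_iff, hy, not_false_eq_true,
        true_and, this, mem_setOf_eq]
      constructor
      · exact Or.inr
      · rintro (⟨⟨x, y⟩, ⟨hx, -⟩, rfl⟩ | h)
        · exact absurd (hD4 _ hx) hy
        · exact h
  rw [this]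
  exact (h1 _ (hF.preimage continuous_fst)).union (hY.compl.inter (MeasurableSet.const _))

/-- when the minimizer is `φ`-a.e. unique, there is a measurable selector
`g` agreeing a.e. with `x*`, `ρ = ∫_Y f(g y, y) dφ`, and all joint moments of any
optimal `μ*` are the corresponding moments of `y ↦ (g y, y)`. -/
theorem stmt4 (n p m : ℕ)
    (Y : Set (Fin p → ℝ)) (hYc : IsCompact Y)
    (f : (Fin n → ℝ) × (Fin p → ℝ) → ℝ) (hf : Continuous f)
    (h : Fin m → (Fin n → ℝ) × (Fin p → ℝ) → ℝ) (hh : ∀ j, Continuous (h j))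
    (K : Set ((Fin n → ℝ) × (Fin p → ℝ)))
    (hKdef : K = {w | w.2 ∈ Y ∧ ∀ j, 0 ≤ h j w}) (hKc : IsCompact K)
    (Ky : (Fin p → ℝ) → Set (Fin n → ℝ))
    (hKy : ∀ y, Ky y = {x | ∀ j, 0 ≤ h j (x, y)})
    (hne : ∀ y ∈ Y, (Ky y).Nonempty)
    (J : (Fin p → ℝ) → ℝ)
    (hJ : ∀ y, J y = sInf ((fun x => f (x, y)) '' Ky y))
    (Xstar : (Fin p → ℝ) → Set (Fin n → ℝ))
    (hXs : ∀ y, Xstar y = {x ∈ Ky y | f (x, y) = J y})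
    (φ : Measure (Fin p → ℝ)) [IsProbabilityMeasure φ] (hφY : φ Yᶜ = 0)
    (ρ : ℝ)
    (hρ : ρ = sInf {r | ∃ μ : Measure ((Fin n → ℝ) × (Fin p → ℝ)),
      IsFiniteMeasure μ ∧ μ Kᶜ = 0 ∧ μ.map Prod.snd = φ ∧ r = ∫ w in K, f w ∂μ})
    (xstar : (Fin p → ℝ) → (Fin n → ℝ))
    (hxu : ∀ᵐ y ∂φ, Xstar y = {xstar y}) :
    ∃ g : (Fin p → ℝ) → (Fin n → ℝ),
      Measurable (fun y : Y => g y.1) ∧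
      (∀ y ∈ Y, g y ∈ Ky y) ∧
      (∀ᵐ y ∂φ, g y = xstar y) ∧
      ρ = ∫ y in Y, f (g y, y) ∂φ ∧
      (∀ μstar : Measure ((Fin n → ℝ) × (Fin p → ℝ)),
        IsFiniteMeasure μstar → μstar Kᶜ = 0 → μstar.map Prod.snd = φ →
        ∫ w in K, f w ∂μstar = ρ →
        ∀ (α : Fin n → ℕ) (β : Fin p → ℕ),
          ∫ w in K, (∏ k, w.1 k ^ α k) * ∏ l, w.2 l ^ β l ∂μstar
            = ∫ y in Y, (∏ l, y l ^ β l) * ∏ k, g y k ^ α k ∂φ) := by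
  have hYm : MeasurableSet Y := hYc.measurableSet
  have hKm : MeasurableSet K := hKc.measurableSet
  have hmem : ∀ x y, (x, y) ∈ K ↔ y ∈ Y ∧ x ∈ Ky y := fun x y => by
    rw [hKdef, hKy]; rfl
  have h4 : ∀ w ∈ K, w.2 ∈ Y := fun w hw => ((hmem w.1 w.2).1 hw).1
  obtain ⟨g, hgm, hgK, hgmin⟩ := exists_selector Y hYm K hKc
    (fun y hy => (hne y hy).imp fun x hx => (hmem x y).2 ⟨hy, hx⟩) h4 f hf
  have hgKy : ∀ y ∈ Y, g y ∈ Ky y := fun y hy => ((hmem _ _).1 (hgK y hy)).2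
  have hJg : ∀ y ∈ Y, J y = f (g y, y) := fun y hy => by
    rw [hJ]
    refine IsLeast.csInf_eq ⟨⟨g y, hgKy y hy, rfl⟩, ?_⟩
    rintro _ ⟨x, hx, rfl⟩
    exact hgmin y hy x ((hmem _ _).2 ⟨hy, hx⟩)
  have hYae : ∀ᵐ y ∂φ, y ∈ Y := hφY
  have hgx : ∀ᵐ y ∂φ, Xstar y = {g y} ∧ y ∈ Y := by
    filter_upwards [hxu, hYae] with y hy hyY
    have : g y ∈ Xstar y := by
      rw [hXs]; exact ⟨hgKy y hyY, (hJg y hyY).symm⟩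
    refine ⟨?_, hyY⟩
    rw [hy] at this ⊢
    rw [mem_singleton_iff.1 this]
  have hGm : Measurable fun y => (g y, y) := hgm.prodMk measurable_id
  have hφr : φ.restrict Y = φ := Measure.restrict_eq_self_of_ae_mem hYae
  obtain ⟨B, hB⟩ := hKc.exists_bound_of_continuousOn hf.continuousOn
  have hGint : Integrable (fun y => f (g y, y)) φ := by
    refine Integrable.of_bound (hf.measurable.comp hGm).aestronglyMeasurable B ?_
    filter_upwards [hYae] with y hy using hB _ (hgK y hy)
  -- facts on feasible measures
  have feas : ∀ μ : Measure ((Fin n → ℝ) × (Fin p → ℝ)), IsFiniteMeasure μ → μ Kᶜ = 0 →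
      μ.map Prod.snd = φ → μ.restrict K = μ ∧ (∀ᵐ w ∂μ, w ∈ K) ∧ Integrable f μ ∧
        Integrable (fun w => f (g w.2, w.2)) μ ∧
        ∫ w, f (g w.2, w.2) ∂μ = ∫ y, f (g y, y) ∂φ := by
    intro μ hμ hμK hμφ
    have hae : ∀ᵐ w ∂μ, w ∈ K := hμK
    refine ⟨Measure.restrict_eq_self_of_ae_mem hae, hae, ?_, ?_, ?_⟩
    · refine Integrable.of_bound hf.measurable.aestronglyMeasurable B ?_
      filter_upwards [hae] with y hy using hB _ hy
    · rw [← hμφ] at hGint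
      exact hGint.comp_measurable measurable_snd
    · rw [← hμφ]
      exact (integral_map measurable_snd.aemeasurable
        (hf.measurable.comp hGm).aestronglyMeasurable).symm
  have hρeq : ρ = ∫ y in Y, f (g y, y) ∂φ := by
    rw [hρ, hφr]
    refine IsLeast.csInf_eq ⟨⟨φ.map fun y => (g y, y), ?_, ?_, ?_, ?_⟩, ?_⟩
    · infer_instance
    · rw [Measure.map_apply hGm hKm.compl]
      exact measure_mono_null (fun y hy hyY => hy (hgK y hyY)) hφY
    · rw [Measure.map_map measurable_snd hGm]
      exact Measure.map_id
    · rw [setIntegral_map hKm hf.measurable.aestronglyMeasurable hGm.aemeasurable,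
        Measure.restrict_eq_self_of_ae_mem]
      filter_upwards [hYae] with y hy using hgK y hy
    · rintro _ ⟨μ, h1, h2, h3, rfl⟩
      obtain ⟨hr, hae, hi1, hi2, hi3⟩ := feas μ h1 h2 h3
      rw [hr, ← hi3]
      refine integral_mono_ae hi2 hi1 ?_
      filter_upwards [hae] with w hw using hgmin _ (h4 w hw) w.1 hw
  refine ⟨g, hgm.comp measurable_subtype_coe, hgKy, ?_, hρeq, ?_⟩
  · filter_upwards [hgx, hxu] with y hy hy'
    rw [hy'] at hy
    exact (singleton_eq_singleton_iff.1 hy.1).symm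
  · intro μ h1 h2 h3 hopt α β
    obtain ⟨hr, hae, hi1, hi2, hi3⟩ := feas μ h1 h2 h3
    rw [hr, hρeq, hφr, ← hi3] at hopt
    have hnn : 0 ≤ᵐ[μ] fun w => f w - f (g w.2, w.2) := by
      filter_upwards [hae] with w hw using sub_nonneg.2 (hgmin _ (h4 w hw) w.1 hw)
    have hzero := (integral_eq_zero_iff_of_nonneg_ae hnn (hi1.sub hi2)).1 (by
      have := integral_sub hi1 hi2
      rw [hopt, sub_self] at this
      exact this)
    have hgx' : ∀ᵐ w ∂μ, Xstar w.2 = {g w.2} ∧ w.2 ∈ Y := by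
      rw [← h3] at hgx
      exact ae_of_ae_map measurable_snd.aemeasurable hgx
    have hwg : ∀ᵐ w ∂μ, w.1 = g w.2 := by
      filter_upwards [hae, hzero, hgx'] with w hw hz hx
      have hm : w.1 ∈ Xstar w.2 := by
        rw [hXs]
        refine ⟨((hmem w.1 w.2).1 hw).2, ?_⟩
        rw [hJg _ hx.2]
        exact sub_eq_zero.1 hz
      rw [hx.1] at hm
      exact hm
    rw [hr, hφr, ← h3, integral_map measurable_snd.aemeasurable (by
      refine Measurable.aestronglyMeasurable ?_
      fun_prop)]
    refine integral_congr_ae ?_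
    filter_upwards [hwg] with w hw
    rw [hw, mul_comm]
end

section
/- Suppose Y ⊂ ℝ^p and K are compact, K_y is nonempty for every y ∈ Y, and for φ-almost all y ∈ Y the set X*_y is a singleton {x*(y)}. Then for every Borel measurable mapping h : ℝ^n → ℝ^q and every measure μ* attaining ρ, one has ∫_Y h(x*(y)) dφ(y) = ∫_K h(x) dμ*(x,y). -/
open MeasureTheory Set TopologicalSpace Filter Topology

/-- for `φ`-a.e. unique minimizers, any measurable functional `h` of the
optimal solutions can be computed from any optimal `μ*`. -/
theorem stmt5 (q : ℕ) (n p m : ℕ)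
    (Y : Set (Fin p → ℝ)) (hYc : IsCompact Y)
    (f : (Fin n → ℝ) × (Fin p → ℝ) → ℝ) (hf : Continuous f)
    (h : Fin m → (Fin n → ℝ) × (Fin p → ℝ) → ℝ) (hh : ∀ j, Continuous (h j))
    (K : Set ((Fin n → ℝ) × (Fin p → ℝ)))
    (hKdef : K = {w | w.2 ∈ Y ∧ ∀ j, 0 ≤ h j w}) (hKc : IsCompact K)
    (Ky : (Fin p → ℝ) → Set (Fin n → ℝ))
    (hKy : ∀ y, Ky y = {x | ∀ j, 0 ≤ h j (x, y)})
    (hne : ∀ y ∈ Y, (Ky y).Nonempty)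
    (J : (Fin p → ℝ) → ℝ)
    (hJ : ∀ y, J y = sInf ((fun x => f (x, y)) '' Ky y))
    (Xstar : (Fin p → ℝ) → Set (Fin n → ℝ))
    (hXs : ∀ y, Xstar y = {x ∈ Ky y | f (x, y) = J y})
    (φ : Measure (Fin p → ℝ)) [IsProbabilityMeasure φ] (hφY : φ Yᶜ = 0)
    (ρ : ℝ)
    (hρ : ρ = sInf {r | ∃ μ : Measure ((Fin n → ℝ) × (Fin p → ℝ)),
      IsFiniteMeasure μ ∧ μ Kᶜ = 0 ∧ μ.map Prod.snd = φ ∧ r = ∫ w in K, f w ∂μ})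
    (xstar : (Fin p → ℝ) → (Fin n → ℝ))
    (hxu : ∀ᵐ y ∂φ, Xstar y = {xstar y})
    (g : (Fin n → ℝ) → (Fin q → ℝ)) (hg : Measurable g)
    (μstar : Measure ((Fin n → ℝ) × (Fin p → ℝ))) (hμfin : IsFiniteMeasure μstar)
    (hμK : μstar Kᶜ = 0) (hμmarg : μstar.map Prod.snd = φ)
    (hμopt : ∫ w in K, f w ∂μstar = ρ) :
    ∫ y in Y, g (xstar y) ∂φ = ∫ w in K, g w.1 ∂μstar := by
  classical
  have hKm : MeasurableSet K := hKc.measurableSet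
  have hYm : MeasurableSet Y := hYc.measurableSet
  have hmem : ∀ x y, (x, y) ∈ K ↔ y ∈ Y ∧ x ∈ Ky y := by
    intro x y
    rw [hKdef, hKy]; rfl
  obtain ⟨C, hC⟩ := hKc.exists_bound_of_continuousOn hf.continuousOn
  have hJle : ∀ w ∈ K, J w.2 ≤ f w := by
    rintro ⟨x, y⟩ hw
    have hw' := (hmem x y).1 hw
    rw [hJ]
    refine csInf_le ⟨-C, ?_⟩ ⟨x, hw'.2, rfl⟩
    rintro _ ⟨x', hx', rfl⟩
    exact (abs_le.1 (hC (x', y) ((hmem _ _).2 ⟨hw'.1, hx'⟩))).1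
  have hJatt : ∀ y ∈ Y, ∃ x, (x, y) ∈ K ∧ f (x, y) = J y := by
    intro y hy
    have hc : IsCompact (K ∩ Prod.snd ⁻¹' {y}) :=
      hKc.inter_right (isClosed_singleton.preimage continuous_snd)
    obtain ⟨x0, hx0⟩ := hne y hy
    obtain ⟨⟨x, y'⟩, hw, hmin⟩ := hc.exists_isMinOn
      ⟨(x0, y), (hmem _ _).2 ⟨hy, hx0⟩, rfl⟩ hf.continuousOn
    obtain ⟨hwK, hwy⟩ := hw
    simp only [mem_preimage, mem_singleton_iff] at hwy
    subst hwy
    refine ⟨x, hwK, le_antisymm ?_ (hJle _ hwK)⟩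
    rw [hJ]
    refine le_csInf ⟨_, x0, hx0, rfl⟩ ?_
    rintro _ ⟨x', hx', rfl⟩
    exact hmin (a := (x', y')) ⟨(hmem _ _).2 ⟨hy, hx'⟩, rfl⟩
  -- measurable version of J
  let J' : (Fin p → ℝ) → ℝ := fun y => if y ∈ Y then J y else 0
  have hJ'Y : ∀ y ∈ Y, J' y = J y := fun y hy => if_pos hy
  have hJ'm : Measurable J' := by
    refine measurable_of_Iic fun t => ?_
    have h1 : MeasurableSet (Prod.snd '' (K ∩ f ⁻¹' Iic t)) :=
      ((hKc.inter_right (isClosed_Iic.preimage hf)).image continuous_snd).measurableSet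
    have h2 : J' ⁻¹' Iic t = (Prod.snd '' (K ∩ f ⁻¹' Iic t)) ∪ (Yᶜ ∩ {_y | (0:ℝ) ≤ t}) := by
      ext y
      constructor
      · intro hy
        by_cases hyY : y ∈ Y
        · left
          obtain ⟨x, hx, hfx⟩ := hJatt y hyY
          refine ⟨(x, y), ⟨hx, ?_⟩, rfl⟩
          have : J' y ≤ t := hy
          rw [hJ'Y y hyY] at this
          exact hfx.le.trans this
        · right
          have : J' y ≤ t := hy
          simp only [J', if_neg hyY] at this
          exact ⟨hyY, this⟩
      · rintro (⟨⟨x, y'⟩, ⟨hK, hft⟩, rfl⟩ | ⟨hyY, ht⟩)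
        · have hyY := ((hmem _ _).1 hK).1
          change J' y' ≤ t
          rw [hJ'Y y' hyY]
          exact (hJle _ hK).trans hft
        · change J' y ≤ t
          simp only [J', if_neg hyY]
          exact ht
    rw [h2]
    exact h1.union (hYm.compl.inter (MeasurableSet.const _))
  have hYae : ∀ᵐ y ∂φ, y ∈ Y := hφY
  have hJ'int : Integrable J' φ := by
    refine Integrable.of_bound hJ'm.aestronglyMeasurable C ?_
    filter_upwards [hYae] with y hy
    obtain ⟨x, hx, hfx⟩ := hJatt y hy
    rw [hJ'Y y hy, ← hfx]
    exact hC _ hx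
  have key : ∀ μ : Measure ((Fin n → ℝ) × (Fin p → ℝ)), IsFiniteMeasure μ → μ Kᶜ = 0 →
      μ.map Prod.snd = φ → Integrable f μ ∧ Integrable (fun w => J' w.2) μ ∧
      ∫ w, J' w.2 ∂μ = ∫ y, J' y ∂φ ∧ μ.restrict K = μ ∧ ∀ᵐ w ∂μ, J' w.2 ≤ f w := by
    intro μ hμ hK hm
    have hKae : ∀ᵐ w ∂μ, w ∈ K := hK
    have hr : μ.restrict K = μ := Measure.restrict_eq_self_of_ae_mem hKae
    refine ⟨?_, ?_, ?_, hr, ?_⟩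
    · exact Integrable.of_bound hf.aestronglyMeasurable C (hKae.mono fun w hw => hC w hw)
    · rw [← hm] at hJ'int
      exact hJ'int.comp_measurable measurable_snd
    · rw [← hm, integral_map measurable_snd.aemeasurable hJ'm.aestronglyMeasurable]
    · filter_upwards [hKae] with w hw
      rw [hJ'Y _ ((hmem w.1 w.2).1 hw).1]
      exact hJle w hw
  -- full-measure set
  obtain ⟨T, hTsub, hTm, hT0⟩ : ∃ T ⊆ {y | y ∈ Y ∧ Xstar y = {xstar y}}, MeasurableSet T ∧
      ∀ᵐ y ∂φ, y ∈ T := by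
    have : {y | y ∈ Y ∧ Xstar y = {xstar y}} ∈ ae φ := hYae.and hxu
    refine ⟨(toMeasurable φ {y | y ∈ Y ∧ Xstar y = {xstar y}}ᶜ)ᶜ, ?_,
      (measurableSet_toMeasurable _ _).compl, ?_⟩
    · exact compl_subset_comm.1 (subset_toMeasurable _ _)
    · rw [ae_iff]
      simp only [mem_compl_iff, not_not, ofPred_mem_eq]
      rw [measure_toMeasurable]
      exact this
  have hTiff : ∀ y ∈ T, ∀ x, ((x, y) ∈ K ∧ f (x, y) = J' y) ↔ x = xstar y := by
    intro y hy x
    obtain ⟨hyY, hX⟩ := hTsub hy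
    have : x ∈ Xstar y ↔ x = xstar y := by rw [hX]; rfl
    rw [← this, hXs, hmem, hJ'Y y hyY]
    simp [hyY]
  let S : Set ((Fin n → ℝ) × (Fin p → ℝ)) := K ∩ {w | f w = J' w.2} ∩ Prod.snd ⁻¹' T
  have hSm : MeasurableSet S :=
    (hKm.inter (measurableSet_eq_fun hf.measurable (hJ'm.comp measurable_snd))).inter
      (measurable_snd hTm)
  have hSx : ∀ w ∈ S, w.1 = xstar w.2 := fun w hw => (hTiff w.2 hw.2 w.1).1 hw.1
  have hxS : ∀ y ∈ T, (xstar y, y) ∈ S := fun y hy => ⟨(hTiff y hy _).2 rfl, hy⟩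
  have hpre : ∀ B, MeasurableSet B → MeasurableSet (T ∩ xstar ⁻¹' B) := by
    intro B hB
    have hinj : InjOn Prod.snd (S ∩ Prod.fst ⁻¹' B) := by
      intro a ha b hb hab
      refine Prod.ext ?_ hab
      rw [hSx a ha.1, hSx b hb.1, hab]
    have h3 := (hSm.inter (measurable_fst hB)).image_of_measurable_injOn measurable_snd hinj
    convert h3 using 1
    ext y
    constructor
    · rintro ⟨hy, hyB⟩
      exact ⟨(xstar y, y), ⟨hxS y hy, hyB⟩, rfl⟩
    · rintro ⟨w, ⟨hw, hwB⟩, rfl⟩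
      refine ⟨hw.2, ?_⟩
      rw [mem_preimage, ← hSx w hw]
      exact hwB
  let x' : (Fin p → ℝ) → (Fin n → ℝ) := fun y => if y ∈ T then xstar y else 0
  have hx'm : Measurable x' := by
    intro B hB
    have : x' ⁻¹' B = (T ∩ xstar ⁻¹' B) ∪ (Tᶜ ∩ {_y | (0 : Fin n → ℝ) ∈ B}) := by
      ext y
      by_cases hy : y ∈ T <;> simp [x', hy]
    rw [this]
    exact (hpre B hB).union (hTm.compl.inter (MeasurableSet.const _))
  have hx'T : ∀ y ∈ T, x' y = xstar y := fun y hy => if_pos hy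
  -- the optimal measure
  have hGm : Measurable (fun y => (x' y, y)) := hx'm.prodMk measurable_id
  have hρle : ρ ≤ ∫ y, J' y ∂φ := by
    rw [hρ]
    refine csInf_le ⟨∫ y, J' y ∂φ, ?_⟩ ⟨φ.map (fun y => (x' y, y)), inferInstance, ?_, ?_, ?_⟩
    · rintro _ ⟨μ, hμ, hK, hm, rfl⟩
      obtain ⟨h1, h2, h3, h4, h5⟩ := key μ hμ hK hm
      rw [h4, ← h3]
      exact integral_mono_ae h2 h1 h5
    · rw [Measure.map_apply hGm hKm.compl]
      change ∀ᵐ y ∂φ, (x' y, y) ∈ K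
      filter_upwards [hT0] with y hy
      rw [hx'T y hy]
      exact (hxS y hy).1.1
    · rw [Measure.map_map measurable_snd hGm]
      exact Measure.map_id
    · rw [Measure.restrict_eq_self_of_ae_mem, integral_map hGm.aemeasurable hf.aestronglyMeasurable]
      · refine integral_congr_ae ?_
        filter_upwards [hT0] with y hy
        rw [hx'T y hy]
        exact (hxS y hy).1.2.symm
      · refine (ae_map_iff (p := fun w => w ∈ K) hGm.aemeasurable hKm).2 ?_
        filter_upwards [hT0] with y hy
        rw [hx'T y hy]
        exact (hxS y hy).1.1
  obtain ⟨h1, h2, h3, h4, h5⟩ := key μstar hμfin hμK hμmarg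
  have hz : ∀ᵐ w ∂μstar, f w - J' w.2 = 0 := by
    have hnn : 0 ≤ᵐ[μstar] fun w => f w - J' w.2 := by
      filter_upwards [h5] with w hw
      exact sub_nonneg.2 hw
    refine (integral_eq_zero_iff_of_nonneg_ae hnn (h1.sub h2)).1 ?_
    refine le_antisymm ?_ (integral_nonneg_of_ae hnn)
    rw [integral_sub h1 h2, h3]
    rw [h4] at hμopt
    linarith
  have hTw : ∀ᵐ w ∂μstar, w.2 ∈ T := by
    rw [← hμmarg] at hT0
    exact ae_of_ae_map measurable_snd.aemeasurable hT0
  have hKae : ∀ᵐ w ∂μstar, w ∈ K := hμK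
  rw [h4, Measure.restrict_eq_self_of_ae_mem hYae]
  calc ∫ y, g (xstar y) ∂φ = ∫ y, g (x' y) ∂φ := by
        refine integral_congr_ae ?_
        filter_upwards [hT0] with y hy
        rw [hx'T y hy]
    _ = ∫ w, g (x' w.2) ∂μstar := by
        rw [← hμmarg]
        exact integral_map measurable_snd.aemeasurable (hg.comp hx'm).aestronglyMeasurable
    _ = ∫ w, g w.1 ∂μstar := by
        refine integral_congr_ae ?_
        filter_upwards [hz, hTw, hKae] with w hw hwT hwK
        rw [hx'T _ hwT, (hTiff w.2 hwT w.1).1 ⟨hwK, sub_eq_zero.1 hw⟩]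
end

section
/- Suppose Y ⊂ ℝ^p and K are compact. Then there is no duality gap between the primal and the polynomial dual: ρ = ρ*, where ρ* = sup{ ∫_Y p dφ : p a real polynomial in the variables y with f(x,y) − p(y) ≥ 0 for all (x,y) ∈ K }. -/
open MeasureTheory Set TopologicalSpace Filter Topology

lemma aux_hb {E : Type*} [AddCommGroup E] [Module ℝ E] (N : E → ℝ)
    (N_hom : ∀ c : ℝ, 0 < c → ∀ x, N (c • x) = c * N x)
    (N_add : ∀ x y, N (x + y) ≤ N x + N y) (x0 : E) :
    ∃ g : E →ₗ[ℝ] ℝ, g x0 = N x0 ∧ ∀ x, g x ≤ N x := by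
  have N_0 : N 0 = 0 := by
    have := N_hom 2 (by norm_num) 0
    rw [smul_zero] at this
    linarith
  have H : ∀ c : ℝ, c • x0 = 0 → (RingHom.id ℝ) c • N x0 = 0 := by
    intro c hc
    rcases smul_eq_zero.1 hc with h | h
    · simp [h]
    · simp [h, N_0]
  obtain ⟨g, hg1, hg2⟩ := exists_extension_of_le_sublinear
    (LinearPMap.mkSpanSingleton' x0 (N x0) H) N N_hom N_add (by
      rintro ⟨x, hx⟩
      obtain ⟨c, rfl⟩ := Submodule.mem_span_singleton.1 hx
      rw [LinearPMap.mkSpanSingleton'_apply]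
      simp only [RingHom.id_apply, smul_eq_mul]
      rcases lt_trichotomy c 0 with h | h | h
      · have h1 := N_hom (-c) (by linarith) x0
        have h2 := N_add (c • x0) ((-c) • x0)
        rw [← add_smul, add_neg_cancel, zero_smul, N_0] at h2
        linarith
      · simp [h, N_0]
      · rw [N_hom c h])
  refine ⟨g, ?_, hg2⟩
  have := hg1 ⟨x0, Submodule.mem_span_singleton_self x0⟩
  exact this.trans (LinearPMap.mkSpanSingleton'_apply_self x0 (N x0) H _)

lemma aux_riesz {X : Type*} [TopologicalSpace X] [CompactSpace X] [T2Space X]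
    [MeasurableSpace X] [BorelSpace X] (L : C(X, ℝ) →ₗ[ℝ] ℝ)
    (hL : ∀ g : C(X, ℝ), (∀ x, 0 ≤ g x) → 0 ≤ L g) :
    ∃ ν : Measure X, IsFiniteMeasure ν ∧ ∀ g : C(X, ℝ), ∫ x, g x ∂ν = L g := by
  let L' : CompactlySupportedContinuousMap X ℝ →ₗ[ℝ] ℝ :=
    { toFun := fun g => L g.toContinuousMap
      map_add' := fun a b => by rw [← map_add]; rfl
      map_smul' := fun c a => by
        rw [RingHom.id_apply, ← map_smul]; rfl }
  let Λ := PositiveLinearMap.mk₀ L' (fun g hg => hL _ hg)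
  refine ⟨RealRMK.rieszMeasure Λ, inferInstance, fun g => ?_⟩
  exact RealRMK.integral_rieszMeasure Λ (CompactlySupportedContinuousMap.continuousMapEquiv g)

lemma aux_lp {X V : Type*} [TopologicalSpace X] [CompactSpace X] [AddCommGroup V] [Module ℝ V]
    (T : V →ₗ[ℝ] C(X, ℝ)) (I : V →ₗ[ℝ] ℝ) (hI : ∀ v, (∀ x, 0 ≤ T v x) → 0 ≤ I v)
    (e : V) (he : T e = 1) (g0 : C(X, ℝ)) :
    ∃ L : C(X, ℝ) →ₗ[ℝ] ℝ, (∀ g : C(X, ℝ), (∀ x, 0 ≤ g x) → 0 ≤ L g) ∧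
      (∀ v, L (T v) = I v) ∧ IsLUB {r | ∃ v, (∀ x, T v x ≤ g0 x) ∧ r = I v} (L g0) := by
  let S : C(X, ℝ) → Set ℝ := fun g => {r | ∃ v, (∀ x, g x ≤ T v x) ∧ r = I v}
  have hmono : ∀ u v, (∀ x, T u x ≤ T v x) → I u ≤ I v := by
    intro u v huv
    have := hI (v - u) (by intro x; simpa using huv x)
    rw [map_sub] at this
    linarith
  have hne : ∀ g, (S g).Nonempty := by
    intro g
    refine ⟨_, ‖g‖ • e, fun x => ?_, rfl⟩
    simpa [he] using (le_abs_self _).trans (g.norm_coe_le_norm x)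
  have hbd : ∀ g, BddBelow (S g) := by
    intro g
    refine ⟨I ((-‖g‖) • e), ?_⟩
    rintro r ⟨v, hv, rfl⟩
    apply hmono
    intro x
    refine le_trans ?_ (hv x)
    have := (neg_abs_le (g x))
    have h2 := g.norm_coe_le_norm x
    rw [Real.norm_eq_abs] at h2
    simp [he]
    linarith
  obtain ⟨L, hL0, hL⟩ := aux_hb (fun g => sInf (S g)) (by
      have key : ∀ c : ℝ, 0 < c → ∀ g, sInf (S (c • g)) ≤ c * sInf (S g) := by
        intro c hc g
        rw [← div_le_iff₀' hc]
        apply le_csInf (hne g)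
        rintro r ⟨v, hv, rfl⟩
        rw [div_le_iff₀' hc]
        apply csInf_le (hbd _)
        refine ⟨c • v, fun x => ?_, by simp⟩
        simpa using mul_le_mul_of_nonneg_left (hv x) hc.le
      intro c hc g
      apply le_antisymm (key c hc g)
      have := key c⁻¹ (inv_pos.2 hc) (c • g)
      rw [smul_smul, inv_mul_cancel₀ hc.ne', one_smul, inv_mul_eq_div, le_div_iff₀' hc] at this
      exact this) (by
      intro a b
      rw [← sub_le_iff_le_add]
      apply le_csInf (hne a)
      rintro r ⟨u, hu, rfl⟩
      rw [sub_le_comm]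
      apply le_csInf (hne b)
      rintro r ⟨v, hv, rfl⟩
      rw [sub_le_comm, sub_le_iff_le_add]
      apply csInf_le (hbd _)
      refine ⟨u + v, fun x => ?_, by simp⟩
      simpa using add_le_add (hu x) (hv x)) (-g0)
  have hpos : ∀ g : C(X, ℝ), (∀ x, 0 ≤ g x) → 0 ≤ L g := by
    intro g hg
    have h1 := hL (-g)
    have h2 : sInf (S (-g)) ≤ 0 := csInf_le (hbd _) ⟨0, fun x => by simpa using hg x, by simp⟩
    rw [map_neg] at h1
    linarith
  have hle : ∀ v, L (T v) ≤ I v := fun v =>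
    (hL (T v)).trans (csInf_le (hbd _) ⟨v, fun x => le_rfl, rfl⟩)
  have heq : ∀ v, L (T v) = I v := by
    intro v
    apply le_antisymm (hle v)
    have := hle (-v)
    simp only [map_neg] at this
    linarith
  refine ⟨L, hpos, heq, ?_, ?_⟩
  · rintro r ⟨v, hv, rfl⟩
    have := hpos (g0 - T v) (by intro x; simpa using hv x)
    rw [map_sub, heq] at this
    linarith
  · intro b hb
    have : -b ≤ sInf (S (-g0)) := by
      apply le_csInf (hne _)
      rintro r ⟨v, hv, rfl⟩
      have := hb ⟨-v, fun x => by have := hv x; simp at this ⊢; linarith, rfl⟩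
      rw [map_neg] at this
      linarith
    rw [map_neg] at hL0
    linarith

lemma aux_sw {p : ℕ} (Y : Set (Fin p → ℝ)) (hYc : IsCompact Y) (u : (Fin p → ℝ) → ℝ)
    (hu : Continuous u) (ε : ℝ) (hε : 0 < ε) :
    ∃ q : MvPolynomial (Fin p) ℝ, ∀ y ∈ Y, |MvPolynomial.eval y q - u y| < ε := by
  haveI : CompactSpace Y := isCompact_iff_compactSpace.1 hYc
  let c : Fin p → C(Y, ℝ) := fun i => ⟨fun y => y.1 i, (continuous_apply i).comp continuous_subtype_val⟩
  let A : Subalgebra ℝ C(Y, ℝ) := (MvPolynomial.aeval (R := ℝ) c).range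
  have key : ∀ (q : MvPolynomial (Fin p) ℝ) (y : Y),
      (MvPolynomial.aeval (R := ℝ) c q) y = MvPolynomial.eval y.1 q := by
    intro q y
    induction q using MvPolynomial.induction_on with
    | C a => simp
    | add a b ha hb => simp [ha, hb]
    | mul_X a i ha => simp [ha, c]
  have hA : A.SeparatesPoints := by
    intro x y hxy
    have : ∃ i, x.1 i ≠ y.1 i := by
      by_contra hcon
      push Not at hcon
      exact hxy (Subtype.ext (funext hcon))
    obtain ⟨i, hi⟩ := this
    refine ⟨c i, ⟨c i, ⟨MvPolynomial.X i, by simp⟩, rfl⟩, hi⟩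
  obtain ⟨⟨g, q, rfl⟩, hg⟩ :=
    ContinuousMap.exists_mem_subalgebra_near_continuous_of_separatesPoints A hA
      (fun y : Y => u y) (by fun_prop) ε hε
  refine ⟨q, fun y hy => ?_⟩
  have := hg ⟨y, hy⟩
  rw [Real.norm_eq_abs] at this
  have k := key q ⟨y, hy⟩
  simp only [← k]
  exact this

lemma aux_int {p : ℕ} (Y : Set (Fin p → ℝ)) (hYc : IsCompact Y) (φ : Measure (Fin p → ℝ))
    [IsFiniteMeasure φ] (hφY : φ Yᶜ = 0) (u : (Fin p → ℝ) → ℝ) (hu : Continuous u) :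
    Integrable u φ := by
  have : φ.restrict Y = φ := Measure.restrict_eq_self_of_ae_mem (by
    rw [ae_iff]; exact hφY)
  rw [← this]
  exact hu.continuousOn.integrableOn_compact hYc

lemma aux_ext {p : ℕ} (Y : Set (Fin p → ℝ)) (hYc : IsCompact Y) (φ ψ : Measure (Fin p → ℝ))
    [IsFiniteMeasure φ] [IsFiniteMeasure ψ] (hφY : φ Yᶜ = 0) (hψY : ψ Yᶜ = 0)
    (H : ∀ q : MvPolynomial (Fin p) ℝ, ∫ y, MvPolynomial.eval y q ∂φ
      = ∫ y, MvPolynomial.eval y q ∂ψ) : φ = ψ := by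
  apply ext_of_forall_integral_eq_of_IsFiniteMeasure
  intro u
  have key : ∀ (χ : Measure (Fin p → ℝ)) [IsFiniteMeasure χ], χ Yᶜ = 0 → ∀ ε : ℝ, 0 < ε →
      ∀ q : MvPolynomial (Fin p) ℝ, (∀ y ∈ Y, |MvPolynomial.eval y q - u y| < ε) →
      |∫ y, MvPolynomial.eval y q ∂χ - ∫ y, u y ∂χ| ≤ ε * χ.real univ := by
    intro χ _ hχ ε hε q hq
    rw [← integral_sub (aux_int Y hYc χ hχ _ (MvPolynomial.continuous_eval q))
      (aux_int Y hYc χ hχ _ u.continuous), ← Real.norm_eq_abs]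
    apply norm_integral_le_of_norm_le_const
    have : ∀ᵐ y ∂χ, y ∈ Y := by rw [ae_iff]; exact hχ
    filter_upwards [this] with y hy
    exact (hq y hy).le
  rw [← sub_eq_zero, ← abs_eq_zero]
  refine le_antisymm ?_ (abs_nonneg _)
  apply le_of_forall_pos_le_add
  intro δ hδ
  set M := φ.real univ + ψ.real univ + 1 with hM
  have h1 : 0 ≤ φ.real univ := measureReal_nonneg
  have h2 : 0 ≤ ψ.real univ := measureReal_nonneg
  have hMp : 0 < M := by linarith
  obtain ⟨q, hq⟩ := aux_sw Y hYc u u.continuous (δ / M) (by positivity)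
  have k1 := key φ hφY (δ / M) (by positivity) q hq
  have k2 := key ψ hψY (δ / M) (by positivity) q hq
  rw [H q] at k1
  have k3 : δ / M * φ.real univ + δ / M * ψ.real univ + δ / M = δ := by
    field_simp; rw [hM]
  have k4 : 0 < δ / M := by positivity
  rw [abs_le] at *
  constructor <;> linarith [k1.1, k1.2, k2.1, k2.2]

/-- no duality gap between `P` and its polynomial dual `P*`. -/
theorem stmt6 (n p m : ℕ)
    (Y : Set (Fin p → ℝ)) (hYc : IsCompact Y)
    (f : (Fin n → ℝ) × (Fin p → ℝ) → ℝ) (hf : Continuous f)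
    (h : Fin m → (Fin n → ℝ) × (Fin p → ℝ) → ℝ) (hh : ∀ j, Continuous (h j))
    (K : Set ((Fin n → ℝ) × (Fin p → ℝ)))
    (hKdef : K = {w | w.2 ∈ Y ∧ ∀ j, 0 ≤ h j w}) (hKc : IsCompact K)
    (Ky : (Fin p → ℝ) → Set (Fin n → ℝ))
    (hKy : ∀ y, Ky y = {x | ∀ j, 0 ≤ h j (x, y)})
    (hne : ∀ y ∈ Y, (Ky y).Nonempty)
    (J : (Fin p → ℝ) → ℝ)
    (hJ : ∀ y, J y = sInf ((fun x => f (x, y)) '' Ky y))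
    (φ : Measure (Fin p → ℝ)) [IsProbabilityMeasure φ] (hφY : φ Yᶜ = 0)
    (ρ : ℝ)
    (hρ : ρ = sInf {r | ∃ μ : Measure ((Fin n → ℝ) × (Fin p → ℝ)),
      IsFiniteMeasure μ ∧ μ Kᶜ = 0 ∧ μ.map Prod.snd = φ ∧ r = ∫ w in K, f w ∂μ})
    (ρstar : ℝ)
    (hρstar : ρstar = sSup {r | ∃ q : MvPolynomial (Fin p) ℝ,
      (∀ w ∈ K, MvPolynomial.eval w.2 q ≤ f w) ∧
      r = ∫ y in Y, MvPolynomial.eval y q ∂φ}) :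
    ρ = ρstar := by
  have hYm : MeasurableSet Y := hYc.measurableSet
  have hKm : MeasurableSet K := hKc.measurableSet
  have hsub : ∀ w ∈ K, w.2 ∈ Y := by
    intro w hw
    rw [hKdef] at hw
    exact hw.1
  have hsurj : ∀ y ∈ Y, ∃ x, (x, y) ∈ K := by
    intro y hy
    obtain ⟨x, hx⟩ := hne y hy
    rw [hKy] at hx
    exact ⟨x, by rw [hKdef]; exact ⟨hy, hx⟩⟩
  have hφr : φ.restrict Y = φ := Measure.restrict_eq_self_of_ae_mem (by
    rw [ae_iff]; exact hφY)
  rw [hφr] at hρstar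
  have hφae : ∀ᵐ y ∂φ, y ∈ Y := by rw [ae_iff]; exact hφY
  haveI : CompactSpace K := isCompact_iff_compactSpace.1 hKc
  let T : MvPolynomial (Fin p) ℝ →ₗ[ℝ] C(K, ℝ) :=
    { toFun := fun q => ⟨fun w => MvPolynomial.eval w.1.2 q,
        (MvPolynomial.continuous_eval q).comp (by fun_prop)⟩
      map_add' := fun a b => by ext w; simp
      map_smul' := fun a b => by ext w; simp }
  have hint : ∀ q : MvPolynomial (Fin p) ℝ, Integrable (fun y => MvPolynomial.eval y q) φ :=
    fun q => aux_int Y hYc φ hφY _ (MvPolynomial.continuous_eval q)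
  let I : MvPolynomial (Fin p) ℝ →ₗ[ℝ] ℝ :=
    { toFun := fun q => ∫ y, MvPolynomial.eval y q ∂φ
      map_add' := fun a b => by
        simp only [map_add]
        exact integral_add (hint a) (hint b)
      map_smul' := fun a b => by
        simp only [MvPolynomial.smul_eval, RingHom.id_apply, smul_eq_mul]
        exact integral_const_mul _ _ }
  let g0 : C(K, ℝ) := ⟨fun w => f w.1, by fun_prop⟩
  obtain ⟨L, hLpos, hLT, hLub⟩ := aux_lp T I (by
    intro q hq
    apply integral_nonneg_of_ae
    filter_upwards [hφae] with y hy
    obtain ⟨x, hx⟩ := hsurj y hy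
    exact hq ⟨(x, y), hx⟩) 1 (by ext w; simp [T]) g0
  have hset : {r | ∃ q : MvPolynomial (Fin p) ℝ,
      (∀ w ∈ K, MvPolynomial.eval w.2 q ≤ f w) ∧ r = ∫ y, MvPolynomial.eval y q ∂φ}
      = {r | ∃ v, (∀ x, T v x ≤ g0 x) ∧ r = I v} := by
    ext r
    constructor
    · rintro ⟨q, hq, hr⟩
      exact ⟨q, fun w => hq w.1 w.2, hr⟩
    · rintro ⟨q, hq, hr⟩
      exact ⟨q, fun w hw => hq ⟨w, hw⟩, hr⟩
  rw [hset] at hρstar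
  have hstar : ρstar = L g0 := by
    rw [hρstar]
    exact hLub.csSup_eq ⟨_, (-‖g0‖) • 1, fun x => by
      have h2 := g0.norm_coe_le_norm x
      rw [Real.norm_eq_abs] at h2
      have := neg_abs_le (g0 x)
      have h3 : T ((-‖g0‖) • 1) x = -‖g0‖ := by simp [T]
      rw [h3]
      linarith, rfl⟩
  obtain ⟨ν, hνf, hν⟩ := aux_riesz L hLpos
  have hemb : MeasurableEmbedding (Subtype.val : K → _) := MeasurableEmbedding.subtype_coe hKm
  set μ := ν.map (Subtype.val : K → (Fin n → ℝ) × (Fin p → ℝ)) with hμ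
  haveI : IsFiniteMeasure μ := by rw [hμ]; infer_instance
  have hμK : μ Kᶜ = 0 := by
    rw [hμ, hemb.map_apply]
    simp
  have hfinmap : IsFiniteMeasure (μ.map Prod.snd) := inferInstance
  have hmarg : μ.map Prod.snd = φ := by
    apply aux_ext Y hYc _ _ _ hφY
    · intro q
      rw [integral_map measurable_snd.aemeasurable
        (MvPolynomial.continuous_eval q).aestronglyMeasurable, hμ, hemb.integral_map]
      exact (hν (T q)).trans (hLT q)
    · rw [Measure.map_apply measurable_snd hYm.compl]
      refine measure_mono_null ?_ hμK
      intro w hw hwK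
      exact hw (hsub w hwK)
  have hresK : ∀ μ' : Measure ((Fin n → ℝ) × (Fin p → ℝ)), μ' Kᶜ = 0 → μ'.restrict K = μ' := by
    intro μ' h'
    exact Measure.restrict_eq_self_of_ae_mem (by rw [ae_iff]; exact h')
  have hval : L g0 = ∫ w in K, f w ∂μ := by
    rw [hresK μ hμK, hμ, hemb.integral_map]
    exact (hν g0).symm
  rw [hstar, hρ]
  refine IsLeast.csInf_eq ⟨⟨μ, inferInstance, hμK, hmarg, hval⟩, ?_⟩
  rintro r ⟨μ', hfin, hK', hm, rfl⟩
  refine hLub.2 ?_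
  rintro r ⟨q, hq, rfl⟩
  have h1 : I q = ∫ w in K, MvPolynomial.eval w.2 q ∂μ' := by
    rw [hresK μ' hK']
    change ∫ y, MvPolynomial.eval y q ∂φ = _
    rw [← hm, integral_map measurable_snd.aemeasurable
        (MvPolynomial.continuous_eval q).aestronglyMeasurable]
  rw [h1]
  apply setIntegral_mono_on
  · exact ((MvPolynomial.continuous_eval q).comp
      continuous_snd).continuousOn.integrableOn_compact hKc
  · exact hf.continuousOn.integrableOn_compact hKc
  · exact hKm
  · intro w hw
    exact hq ⟨w, hw⟩
end

section
/- Suppose Y ⊂ ℝ^p and K are compact and K_y is nonempty for every y ∈ Y. Let (p_i)_{i∈ℕ} be polynomials in ℝ[y] with f(x,y) − p_i(y) ≥ 0 on K for all i and ∫_Y p_i dφ → ρ* := sup{ ∫_Y p dφ : p ∈ ℝ[y], f − p ≥ 0 on K }. Then p_i(y) ≤ J(y) for all y ∈ Y and ∫_Y |J(y) − p_i(y)| dφ(y) → 0 as i → ∞. -/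
open MeasureTheory Set TopologicalSpace Filter Topology

lemma sw_aux {p : ℕ} {Y : Set (Fin p → ℝ)} (hY : IsCompact Y) (g : (Fin p → ℝ) → ℝ)
    (hg : Continuous g) {ε : ℝ} (hε : 0 < ε) :
    ∃ q : MvPolynomial (Fin p) ℝ, ∀ y ∈ Y, |MvPolynomial.eval y q - g y| < ε := by
  let Φ : MvPolynomial (Fin p) ℝ →ₐ[ℝ] C(Fin p → ℝ, ℝ) :=
    MvPolynomial.aeval (fun i => (⟨fun y => y i, continuous_apply i⟩ : C(Fin p → ℝ, ℝ)))
  have hΦ : ∀ q y, Φ q y = MvPolynomial.eval y q := by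
    intro q y
    induction q using MvPolynomial.induction_on with
    | C a => simp [Φ]
    | add a b ha hb => simp [ha, hb]
    | mul_X a i ha => simp [ha]; left; simp [Φ]
  have hsep : Φ.range.SeparatesPoints := by
    intro x y hxy
    obtain ⟨i, hi⟩ := Function.ne_iff.mp hxy
    refine ⟨Φ (MvPolynomial.X i), ⟨Φ (MvPolynomial.X i), ⟨_, rfl⟩, rfl⟩, ?_⟩
    simpa [hΦ] using hi
  obtain ⟨_, ⟨q, rfl⟩, hq⟩ :=
    ContinuousMap.exists_mem_subalgebra_near_continuous_of_isCompact_of_separatesPoints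
      hsep ⟨g, hg⟩ hY hε
  refine ⟨q, fun y hy => ?_⟩
  have := hq y hy
  rw [Real.norm_eq_abs] at this
  rw [← hΦ]
  exact this

set_option maxHeartbeats 1000000 in
/-- any maximizing sequence of polynomials for the dual `P*` is a sequence
of lower approximations of `J` converging to `J` in `L¹(φ)`. -/
theorem stmt7 (n p m : ℕ)
    (Y : Set (Fin p → ℝ)) (hYc : IsCompact Y)
    (f : (Fin n → ℝ) × (Fin p → ℝ) → ℝ) (hf : Continuous f)
    (h : Fin m → (Fin n → ℝ) × (Fin p → ℝ) → ℝ) (hh : ∀ j, Continuous (h j))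
    (K : Set ((Fin n → ℝ) × (Fin p → ℝ)))
    (hKdef : K = {w | w.2 ∈ Y ∧ ∀ j, 0 ≤ h j w}) (hKc : IsCompact K)
    (Ky : (Fin p → ℝ) → Set (Fin n → ℝ))
    (hKy : ∀ y, Ky y = {x | ∀ j, 0 ≤ h j (x, y)})
    (hne : ∀ y ∈ Y, (Ky y).Nonempty)
    (J : (Fin p → ℝ) → ℝ)
    (hJ : ∀ y, J y = sInf ((fun x => f (x, y)) '' Ky y))
    (φ : Measure (Fin p → ℝ)) [IsProbabilityMeasure φ] (hφY : φ Yᶜ = 0)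
    (ρstar : ℝ)
    (hρstar : ρstar = sSup {r | ∃ q : MvPolynomial (Fin p) ℝ,
      (∀ w ∈ K, MvPolynomial.eval w.2 q ≤ f w) ∧
      r = ∫ y in Y, MvPolynomial.eval y q ∂φ})
    (ps : ℕ → MvPolynomial (Fin p) ℝ)
    (hfeas : ∀ i, ∀ w ∈ K, MvPolynomial.eval w.2 (ps i) ≤ f w)
    (hmax : Tendsto (fun i => ∫ y in Y, MvPolynomial.eval y (ps i) ∂φ) atTop (𝓝 ρstar)) :
    (∀ i, ∀ y ∈ Y, MvPolynomial.eval y (ps i) ≤ J y) ∧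
    Tendsto (fun i => ∫ y in Y, |J y - MvPolynomial.eval y (ps i)| ∂φ) atTop (𝓝 0) := by
  have hKmem : ∀ x y, y ∈ Y → x ∈ Ky y → (x, y) ∈ K := by
    intro x y hy hx
    rw [hKy] at hx
    rw [hKdef]
    exact ⟨hy, hx⟩
  have hKsnd : ∀ w ∈ K, w.2 ∈ Y ∧ w.1 ∈ Ky w.2 := by
    intro w hw
    rw [hKdef] at hw
    rw [hKy]
    exact hw
  obtain ⟨M, hM⟩ : ∃ M, ∀ w ∈ K, |f w| ≤ M := by
    obtain ⟨M, hM⟩ := hKc.exists_bound_of_continuousOn hf.continuousOn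
    exact ⟨M, hM⟩
  have hJle : ∀ w ∈ K, J w.2 ≤ f w := by
    intro w hw
    rw [hJ]
    refine csInf_le ⟨-M, ?_⟩ ⟨w.1, (hKsnd w hw).2, rfl⟩
    rintro _ ⟨x, hx, rfl⟩
    exact (abs_le.mp (hM _ (hKmem x w.2 (hKsnd w hw).1 hx))).1
  have hleJ : ∀ y ∈ Y, ∀ c, (∀ x ∈ Ky y, c ≤ f (x, y)) → c ≤ J y := by
    intro y hy c hc
    rw [hJ]
    refine le_csInf ((hne y hy).image _) ?_
    rintro _ ⟨x, hx, rfl⟩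
    exact hc x hx
  have hJM : ∀ y ∈ Y, |J y| ≤ M := by
    intro y hy
    rw [abs_le]
    refine ⟨hleJ y hy _ fun x hx => (abs_le.mp (hM _ (hKmem x y hy hx))).1, ?_⟩
    obtain ⟨x, hx⟩ := hne y hy
    exact (hJle _ (hKmem x y hy hx)).trans (abs_le.mp (hM _ (hKmem x y hy hx))).2
  have hpJ : ∀ q : MvPolynomial (Fin p) ℝ, (∀ w ∈ K, MvPolynomial.eval w.2 q ≤ f w) →
      ∀ y ∈ Y, MvPolynomial.eval y q ≤ J y := by
    intro q hq y hy
    refine hleJ y hy _ fun x hx => ?_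
    have h1 := hq (x, y) (hKmem x y hy hx)
    exact h1
  refine ⟨fun i => hpJ _ (hfeas i), ?_⟩
  have hYne : Y.Nonempty := by
    by_contra hc
    rw [Set.not_nonempty_iff_eq_empty] at hc
    subst hc
    simp at hφY
  have hKne : K.Nonempty := by
    obtain ⟨y, hy⟩ := hYne
    obtain ⟨x, hx⟩ := hne y hy
    exact ⟨_, hKmem x y hy hx⟩
  -- Lipschitz regularisations
  let Jk : ℕ → (Fin p → ℝ) → ℝ := fun k y => sInf ((fun w => f w + k * dist w.2 y) '' K)
  have hJkc : ∀ k, Continuous (Jk k) := by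
    intro k
    apply IsCompact.continuous_sInf hKc (f := fun y w => f w + k * dist w.2 y)
    change Continuous fun z : (Fin p → ℝ) × ((Fin n → ℝ) × (Fin p → ℝ)) =>
      f z.2 + k * dist z.2.2 z.1
    fun_prop
  have hJkge : ∀ (k : ℕ) y c, (∀ w ∈ K, c ≤ f w + k * dist w.2 y) → c ≤ Jk k y := by
    intro k y c hc
    refine le_csInf (hKne.image _) ?_
    rintro _ ⟨w, hw, rfl⟩
    exact hc w hw
  have hJkM : ∀ k y, -M ≤ Jk k y := by
    intro k y
    refine hJkge k y _ fun w hw => ?_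
    have := (abs_le.mp (hM w hw)).1
    have : 0 ≤ (k : ℝ) * dist w.2 y := by positivity
    linarith
  have hJkJ : ∀ k, ∀ y ∈ Y, Jk k y ≤ J y := by
    intro k y hy
    refine hleJ y hy _ fun x hx => ?_
    refine csInf_le ⟨-M, ?_⟩ ⟨(x, y), hKmem x y hy hx, by simp⟩
    rintro _ ⟨w, hw, rfl⟩
    have := (abs_le.mp (hM w hw)).1
    have : 0 ≤ (k : ℝ) * dist w.2 y := by positivity
    dsimp only
    linarith
  have hlim : ∀ y ∈ Y, Tendsto (fun k => Jk k y) atTop (𝓝 (J y)) := by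
    intro y hy
    rw [tendsto_order]
    refine ⟨fun a ha => ?_, fun a ha => Eventually.of_forall fun k => (hJkJ k y hy).trans_lt ha⟩
    obtain ⟨c, hac, hcJ⟩ := exists_between ha
    have hC : IsCompact (K ∩ {w | f w ≤ c}) :=
      hKc.inter_right (isClosed_le hf continuous_const)
    obtain ⟨δ, hδ, hδC⟩ : ∃ δ > 0, ∀ w ∈ K, f w ≤ c → δ ≤ dist w.2 y := by
      rcases (K ∩ {w | f w ≤ c}).eq_empty_or_nonempty with he | hn
      · refine ⟨1, one_pos, fun w hw hc => ?_⟩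
        have : w ∈ K ∩ {w | f w ≤ c} := ⟨hw, hc⟩
        rw [he] at this
        exact this.elim
      · obtain ⟨w, hw, hmin⟩ := hC.exists_isMinOn hn
          (f := fun w : (Fin n → ℝ) × (Fin p → ℝ) => dist w.2 y)
          (by fun_prop)
        refine ⟨dist w.2 y, dist_pos.mpr ?_, fun v hv hvc => hmin ⟨hv, hvc⟩⟩
        intro he
        have h1 := hJle w hw.1
        have h2 : f w ≤ c := hw.2
        rw [he] at h1
        linarith
    obtain ⟨N, hN⟩ := exists_nat_ge ((c + M) / δ)
    filter_upwards [eventually_ge_atTop N] with k hk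
    refine hac.trans_le (hJkge k y c fun w hw => ?_)
    by_cases hwc : f w ≤ c
    · have h1 := hδC w hw hwc
      have h2 : (c + M) / δ ≤ k := hN.trans (by exact_mod_cast hk)
      rw [div_le_iff₀ hδ] at h2
      have h3 : (k : ℝ) * δ ≤ k * dist w.2 y := by gcongr
      have := (abs_le.mp (hM w hw)).1
      linarith
    · have : 0 ≤ (k : ℝ) * dist w.2 y := by positivity
      push Not at hwc
      linarith
  have hYm : MeasurableSet Y := hYc.measurableSet
  have hae : ∀ {P : (Fin p → ℝ) → Prop}, (∀ y ∈ Y, P y) → ∀ᵐ y ∂(φ.restrict Y), P y :=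
    fun hP => (ae_restrict_iff' hYm).mpr (Eventually.of_forall hP)
  have hJmeas : AEStronglyMeasurable J (φ.restrict Y) :=
    aestronglyMeasurable_of_tendsto_ae atTop
      (fun k => (hJkc k).aestronglyMeasurable) (hae hlim)
  have hJint : Integrable J (φ.restrict Y) :=
    Integrable.of_bound hJmeas M (hae hJM)
  have hpint : ∀ q : MvPolynomial (Fin p) ℝ,
      Integrable (fun y => MvPolynomial.eval y q) (φ.restrict Y) := fun q =>
    (MvPolynomial.continuous_eval q).continuousOn.integrableOn_compact hYc
  have hqex : ∀ k : ℕ, ∃ q : MvPolynomial (Fin p) ℝ, ∀ y ∈ Y,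
      |MvPolynomial.eval y q - (Jk k y - 1 / ((k : ℝ) + 1))| < 1 / ((k : ℝ) + 1) := fun k =>
    sw_aux hYc _ ((hJkc k).sub continuous_const) (by positivity)
  choose q hq using hqex
  have hq1 : ∀ k, ∀ y ∈ Y, MvPolynomial.eval y (q k) ≤ Jk k y := by
    intro k y hy
    have := (abs_lt.mp (hq k y hy)).2
    linarith
  have hq2 : ∀ k, ∀ y ∈ Y, Jk k y - 2 * (1 / ((k : ℝ) + 1)) ≤ MvPolynomial.eval y (q k) := by
    intro k y hy
    have := (abs_lt.mp (hq k y hy)).1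
    linarith
  have hqlim : Tendsto (fun k => ∫ y in Y, MvPolynomial.eval y (q k) ∂φ) atTop
      (𝓝 (∫ y in Y, J y ∂φ)) := by
    refine tendsto_integral_of_dominated_convergence (fun _ => M + 2)
      (fun k => (hpint (q k)).aestronglyMeasurable) (integrable_const _)
      (fun k => hae fun y hy => ?_) (hae fun y hy => ?_)
    · have h1 := hq1 k y hy
      have h2 := hq2 k y hy
      have h3 := hJkM k y
      have h4 := hJkJ k y hy
      have h5 := (abs_le.mp (hJM y hy)).2
      have h6 : 1 / ((k : ℝ) + 1) ≤ 1 := by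
        rw [div_le_one (by positivity)]
        have : (0 : ℝ) ≤ k := k.cast_nonneg
        linarith
      rw [Real.norm_eq_abs, abs_le]
      constructor <;> linarith
    · refine tendsto_of_tendsto_of_tendsto_of_le_of_le ?_ (hlim y hy)
        (fun k => hq2 k y hy) (fun k => hq1 k y hy)
      have := (hlim y hy).sub ((tendsto_one_div_add_atTop_nhds_zero_nat (𝕜 := ℝ)).const_mul 2)
      simpa using this
  have hge : ∫ y in Y, J y ∂φ ≤ ρstar := by
    refine le_of_tendsto' hqlim fun k => ?_
    rw [hρstar]
    refine le_csSup ⟨∫ y in Y, J y ∂φ, ?_⟩ ⟨q k, fun w hw => ?_, rfl⟩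
    · rintro _ ⟨r, hr, rfl⟩
      exact integral_mono_ae (hpint r) hJint (hae (hpJ r hr))
    · have hwY := (hKsnd w hw).1
      exact ((hq1 k _ hwY).trans (hJkJ k _ hwY)).trans (hJle w hw)
  have hle : ρstar ≤ ∫ y in Y, J y ∂φ :=
    le_of_tendsto' hmax fun i => integral_mono_ae (hpint _) hJint (hae (hpJ _ (hfeas i)))
  have heq : ∀ i, ∫ y in Y, |J y - MvPolynomial.eval y (ps i)| ∂φ
      = (∫ y in Y, J y ∂φ) - ∫ y in Y, MvPolynomial.eval y (ps i) ∂φ := by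
    intro i
    rw [← integral_sub hJint (hpint _)]
    refine integral_congr_ae (hae fun y hy => ?_)
    exact abs_of_nonneg (sub_nonneg.mpr (hpJ _ (hfeas i) y hy))
  simp_rw [heq]
  have := hmax.const_sub (∫ y in Y, J y ∂φ)
  rwa [le_antisymm hle hge, sub_self] at this
end

section
/- Suppose Y ⊂ ℝ^p and K are compact and K_y is nonempty for every y ∈ Y. Let (p_i)_{i∈ℕ} ⊂ ℝ[y] satisfy f − p_i ≥ 0 on K for all i and ∫_Y p_i dφ → sup{ ∫_Y p dφ : p ∈ ℝ[y], f − p ≥ 0 on K }, and define p̃_0 := p_0 and p̃_i(y) := max(p̃_{i−1}(y), p_i(y)) for i ≥ 1. Then p̃_i → J almost uniformly on Y with respect to φ, i.e., for every ε > 0 there is a Borel set A ⊂ Y with φ(A) < ε such that p̃_i → J uniformly on Y \ A. -/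
open MeasureTheory Set TopologicalSpace Filter Topology

theorem aux_poly {p : ℕ} (Y : Set (Fin p → ℝ)) (hYc : IsCompact Y)
    (g : (Fin p → ℝ) → ℝ) (hg : Continuous g) (δ : ℝ) (hδ : 0 < δ) :
    ∃ q : MvPolynomial (Fin p) ℝ, ∀ y ∈ Y, |MvPolynomial.eval y q - g y| < δ := by
  haveI : CompactSpace Y := isCompact_iff_compactSpace.mp hYc
  let co : Fin p → C(Y, ℝ) := fun i => ⟨fun y => y.1 i, (continuous_apply i).comp continuous_subtype_val⟩
  let A : Subalgebra ℝ C(Y, ℝ) := (MvPolynomial.aeval co).range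
  have hA : A.SeparatesPoints := by
    intro x y hxy
    have : ∃ i, x.1 i ≠ y.1 i := by
      by_contra hc
      push Not at hc
      exact hxy (Subtype.ext (funext hc))
    obtain ⟨i, hi⟩ := this
    exact ⟨co i, ⟨co i, ⟨MvPolynomial.X i, by simp⟩, rfl⟩, hi⟩
  obtain ⟨⟨a, q, hq⟩, ha⟩ := ContinuousMap.exists_mem_subalgebra_near_continuous_of_separatesPoints
    A hA (fun y : Y => g y.1) (by fun_prop) δ hδ
  refine ⟨q, fun y hy => ?_⟩
  have h1 := ha ⟨y, hy⟩
  have h2 : a ⟨y, hy⟩ = MvPolynomial.eval y q := by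
    rw [← hq]
    have : ∀ q : MvPolynomial (Fin p) ℝ,
        (MvPolynomial.aeval co q) ⟨y, hy⟩ = MvPolynomial.eval y q := by
      intro q
      induction q using MvPolynomial.induction_on with
      | C r => simp [MvPolynomial.algebraMap_eq]
      | add a b ha hb => simp [ha, hb]
      | mul_X a i ha => simp [ha, co]
    exact this q
  simpa [h2] using h1

theorem aux_reg {n p : ℕ} (f : (Fin n → ℝ) × (Fin p → ℝ) → ℝ) (hf : Continuous f)
    (K : Set ((Fin n → ℝ) × (Fin p → ℝ))) (hKc : IsCompact K)
    (y : Fin p → ℝ) (c : ℝ) (hc : ∀ w ∈ K, w.2 = y → c < f w) :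
    ∃ k0 : ℕ, ∀ k : ℕ, k0 ≤ k → ∀ w ∈ K, c ≤ f w + k * dist y w.2 := by
  by_contra hcon
  push Not at hcon
  choose k hk w hwK hw using hcon
  obtain ⟨w0, hw0, s, hs, hlim⟩ := hKc.tendsto_subseq hwK
  obtain ⟨M, hM⟩ := hKc.exists_bound_of_continuousOn hf.continuousOn
  have hfl : Tendsto (fun i => f (w (s i))) atTop (𝓝 (f w0)) := (hf.tendsto w0).comp hlim
  have hdl : Tendsto (fun i => dist y (w (s i)).2) atTop (𝓝 (dist y w0.2)) := by
    have : Continuous fun v : (Fin n → ℝ) × (Fin p → ℝ) => dist y v.2 := by fun_prop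
    exact (this.tendsto w0).comp hlim
  have hle : f w0 ≤ c := le_of_tendsto' hfl fun i => by
    have := hw (s i)
    have h2 : 0 ≤ (k (s i) : ℝ) * dist y (w (s i)).2 := by positivity
    linarith
  have h0 : dist y w0.2 ≤ 0 := by
    have hz : Tendsto (fun i : ℕ => (c + M) / (i : ℝ)) atTop (𝓝 0) :=
      tendsto_const_div_atTop_nhds_zero_nat _
    refine le_of_tendsto_of_tendsto hdl hz ?_
    filter_upwards [eventually_gt_atTop 0] with i hi
    have h1 := hw (s i)
    have h2 := (abs_le.mp (hM _ (hwK (s i)))).1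
    have h3 : (i : ℝ) ≤ k (s i) := by exact_mod_cast (hs.id_le i).trans (hk (s i))
    have hi' : (0 : ℝ) < i := by exact_mod_cast hi
    rw [le_div_iff₀ hi']
    have h4 := mul_le_mul_of_nonneg_right h3 (dist_nonneg (x := y) (y := (w (s i)).2))
    linarith
  have := hc w0 hw0 (dist_le_zero.mp h0).symm
  linarith

theorem aux_g {n p : ℕ} (Y : Set (Fin p → ℝ))
    (f : (Fin n → ℝ) × (Fin p → ℝ) → ℝ) (hf : Continuous f)
    (K : Set ((Fin n → ℝ) × (Fin p → ℝ))) (hKc : IsCompact K)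
    (J : (Fin p → ℝ) → ℝ) (M : ℝ) (hMl : ∀ w ∈ K, -M ≤ f w)
    (hleJ : ∀ y ∈ Y, ∀ c, (∀ x, (x, y) ∈ K → c ≤ f (x, y)) → c ≤ J y)
    (hJle : ∀ w ∈ K, J w.2 ≤ f w)
    (hex : ∀ y ∈ Y, ∃ x, (x, y) ∈ K) :
    ∃ g : ℕ → (Fin p → ℝ) → ℝ, (∀ k, Continuous (g k)) ∧
      (∀ k, ∀ w ∈ K, g k w.2 ≤ f w) ∧ (∀ k, ∀ y ∈ Y, g k y ≤ J y) ∧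
      (∀ k, ∀ y ∈ Y, -M ≤ g k y) ∧ (∀ y ∈ Y, Tendsto (fun k => g k y) atTop (𝓝 (J y))) := by
  let F : ℕ → (Fin p → ℝ) → (Fin n → ℝ) × (Fin p → ℝ) → ℝ :=
    fun k y w => f w + k * dist y w.2
  let g : ℕ → (Fin p → ℝ) → ℝ := fun k y => sInf (F k y '' K)
  have hgc : ∀ k, Continuous (g k) := fun k => by
    apply hKc.continuous_sInf
    simp only [F, Function.HasUncurry.uncurry]
    fun_prop
  have hFl : ∀ k y, ∀ w ∈ K, -M ≤ F k y w := fun k y w hw => by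
    have h1 := hMl w hw
    have h2 : 0 ≤ (k : ℝ) * dist y w.2 := by positivity
    simp only [F]
    linarith
  have hgf : ∀ k, ∀ w ∈ K, g k w.2 ≤ f w := fun k w hw => by
    refine csInf_le ⟨-M, ?_⟩ ⟨w, hw, by simp [F]⟩
    rintro _ ⟨v, hv, rfl⟩
    exact hFl k _ v hv
  have hgJ : ∀ k, ∀ y ∈ Y, g k y ≤ J y := fun k y hy =>
    hleJ y hy (g k y) fun x hx => hgf k (x, y) hx
  have hleg : ∀ k, ∀ y ∈ Y, ∀ c, (∀ w ∈ K, c ≤ F k y w) → c ≤ g k y := by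
    intro k y hy c hc
    obtain ⟨x, hx⟩ := hex y hy
    refine le_csInf ⟨_, _, hx, rfl⟩ ?_
    rintro _ ⟨v, hv, rfl⟩
    exact hc v hv
  have hgl : ∀ k, ∀ y ∈ Y, -M ≤ g k y := fun k y hy => hleg k y hy (-M) (hFl k y)
  have hgt : ∀ y ∈ Y, Tendsto (fun k => g k y) atTop (𝓝 (J y)) := by
    intro y hy
    rw [tendsto_order]
    constructor
    · intro a ha
      obtain ⟨c, hac, hcJ⟩ := exists_between ha
      obtain ⟨k0, hk0⟩ := aux_reg f hf K hKc y c (by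
        rintro w hw rfl
        exact hcJ.trans_le (hJle w hw))
      filter_upwards [eventually_ge_atTop k0] with k hk
      exact hac.trans_le (hleg k y hy c (hk0 k hk))
    · intro a ha
      exact Eventually.of_forall fun k => (hgJ k y hy).trans_lt ha
  exact ⟨g, hgc, hgf, hgJ, hgl, hgt⟩

/-- the running maxima of a maximizing sequence of dual polynomials
converge to `J` almost uniformly on `Y` with respect to `φ`. -/
theorem stmt8 (n p m : ℕ)
    (Y : Set (Fin p → ℝ)) (hYc : IsCompact Y)
    (f : (Fin n → ℝ) × (Fin p → ℝ) → ℝ) (hf : Continuous f)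
    (h : Fin m → (Fin n → ℝ) × (Fin p → ℝ) → ℝ) (hh : ∀ j, Continuous (h j))
    (K : Set ((Fin n → ℝ) × (Fin p → ℝ)))
    (hKdef : K = {w | w.2 ∈ Y ∧ ∀ j, 0 ≤ h j w}) (hKc : IsCompact K)
    (Ky : (Fin p → ℝ) → Set (Fin n → ℝ))
    (hKy : ∀ y, Ky y = {x | ∀ j, 0 ≤ h j (x, y)})
    (hne : ∀ y ∈ Y, (Ky y).Nonempty)
    (J : (Fin p → ℝ) → ℝ)
    (hJ : ∀ y, J y = sInf ((fun x => f (x, y)) '' Ky y))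
    (φ : Measure (Fin p → ℝ)) [IsProbabilityMeasure φ] (hφY : φ Yᶜ = 0)
    (ps : ℕ → MvPolynomial (Fin p) ℝ)
    (hfeas : ∀ i, ∀ w ∈ K, MvPolynomial.eval w.2 (ps i) ≤ f w)
    (hmax : Tendsto (fun i => ∫ y in Y, MvPolynomial.eval y (ps i) ∂φ) atTop
      (𝓝 (sSup {r | ∃ q : MvPolynomial (Fin p) ℝ,
        (∀ w ∈ K, MvPolynomial.eval w.2 q ≤ f w) ∧
        r = ∫ y in Y, MvPolynomial.eval y q ∂φ})))
    (ptilde : ℕ → (Fin p → ℝ) → ℝ)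
    (hpt0 : ptilde 0 = fun y => MvPolynomial.eval y (ps 0))
    (hptS : ∀ i, ptilde (i + 1)
      = fun y => max (ptilde i y) (MvPolynomial.eval y (ps (i + 1)))) :
    ∀ ε : ENNReal, 0 < ε → ∃ A : Set (Fin p → ℝ),
      A ⊆ Y ∧ MeasurableSet A ∧ φ A < ε ∧
      TendstoUniformlyOn ptilde J atTop (Y \ A) := by
  obtain ⟨M, hM⟩ := hKc.exists_bound_of_continuousOn hf.continuousOn
  have hMl : ∀ w ∈ K, -M ≤ f w := fun w hw => (abs_le.mp (hM w hw)).1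
  have hMu : ∀ w ∈ K, f w ≤ M := fun w hw => (abs_le.mp (hM w hw)).2
  have hmem : ∀ y ∈ Y, ∀ x, x ∈ Ky y ↔ (x, y) ∈ K := by
    intro y hy x
    simp [hKy, hKdef, hy]
  have hKY : ∀ w ∈ K, w.2 ∈ Y := by
    intro w hw
    rw [hKdef] at hw
    exact hw.1
  have hleJ : ∀ y ∈ Y, ∀ c, (∀ x, (x, y) ∈ K → c ≤ f (x, y)) → c ≤ J y := by
    intro y hy c hc
    rw [hJ]
    refine le_csInf ((hne y hy).image _) ?_
    rintro _ ⟨x, hx, rfl⟩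
    exact hc x ((hmem y hy x).1 hx)
  have hJle : ∀ w ∈ K, J w.2 ≤ f w := by
    intro w hw
    rw [hJ]
    refine csInf_le ⟨-M, ?_⟩ ⟨w.1, (hmem w.2 (hKY w hw) w.1).2 hw, rfl⟩
    rintro _ ⟨x, hx, rfl⟩
    exact hMl _ ((hmem w.2 (hKY w hw) x).1 hx)
  have hex : ∀ y ∈ Y, ∃ x, (x, y) ∈ K := fun y hy => by
    obtain ⟨x, hx⟩ := hne y hy
    exact ⟨x, (hmem y hy x).1 hx⟩
  have hJl : ∀ y ∈ Y, -M ≤ J y := fun y hy => hleJ y hy (-M) fun x hx => hMl (x, y) hx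
  have hJu : ∀ y ∈ Y, J y ≤ M := fun y hy => by
    obtain ⟨x, hx⟩ := hex y hy
    exact (hJle (x, y) hx).trans (hMu (x, y) hx)
  -- the regularisation
  obtain ⟨g, hgc, hgf, hgJ, hgl, hgt⟩ : ∃ g : ℕ → (Fin p → ℝ) → ℝ, (∀ k, Continuous (g k)) ∧
      (∀ k, ∀ w ∈ K, g k w.2 ≤ f w) ∧ (∀ k, ∀ y ∈ Y, g k y ≤ J y) ∧
      (∀ k, ∀ y ∈ Y, -M ≤ g k y) ∧ (∀ y ∈ Y, Tendsto (fun k => g k y) atTop (𝓝 (J y))) :=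
    aux_g Y f hf K hKc J M hMl hleJ hJle hex
  have hYm : MeasurableSet Y := hYc.isClosed.measurableSet
  have haeY : ∀ᵐ y ∂(φ.restrict Y), y ∈ Y := ae_restrict_mem hYm
  have hJm : StronglyMeasurable (Y.indicator J) := by
    refine stronglyMeasurable_of_tendsto (f := fun k => Y.indicator (g k)) atTop
      (fun k => (hgc k).stronglyMeasurable.indicator hYm) ?_
    rw [tendsto_pi_nhds]
    intro y
    by_cases hy : y ∈ Y
    · simpa [hy] using hgt y hy
    · simp [hy]
  have hJae : AEStronglyMeasurable J (φ.restrict Y) := by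
    refine ⟨_, hJm, ?_⟩
    filter_upwards [haeY] with y hy
    simp [hy]
  have hJint : Integrable J (φ.restrict Y) := by
    refine Integrable.of_bound hJae M ?_
    filter_upwards [haeY] with y hy
    exact abs_le.mpr ⟨hJl y hy, hJu y hy⟩
  have hcint : ∀ u : (Fin p → ℝ) → ℝ, Continuous u → Integrable u (φ.restrict Y) :=
    fun u hu => hu.continuousOn.integrableOn_compact hYc
  have hgint : Tendsto (fun k => ∫ y in Y, g k y ∂φ) atTop (𝓝 (∫ y in Y, J y ∂φ)) := by
    refine tendsto_integral_of_dominated_convergence (fun _ => M)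
      (fun k => (hgc k).aestronglyMeasurable) (integrable_const _) (fun k => ?_) ?_
    · filter_upwards [haeY] with y hy
      exact abs_le.mpr ⟨hgl k y hy, (hgJ k y hy).trans (hJu y hy)⟩
    · filter_upwards [haeY] with y hy using hgt y hy
  have hpc : ∀ q : MvPolynomial (Fin p) ℝ, Continuous fun y => MvPolynomial.eval y q :=
    fun q => MvPolynomial.continuous_eval q
  have hpJ : ∀ q : MvPolynomial (Fin p) ℝ, (∀ w ∈ K, MvPolynomial.eval w.2 q ≤ f w) →
      ∀ y ∈ Y, MvPolynomial.eval y q ≤ J y := fun q hq y hy => hleJ y hy (MvPolynomial.eval y q) fun x hx => hq (x, y) hx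
  set S : Set ℝ := {r | ∃ q : MvPolynomial (Fin p) ℝ,
        (∀ w ∈ K, MvPolynomial.eval w.2 q ≤ f w) ∧
        r = ∫ y in Y, MvPolynomial.eval y q ∂φ} with hS
  have hub : ∀ r ∈ S, r ≤ ∫ y in Y, J y ∂φ := by
    rintro r ⟨q, hq, rfl⟩
    refine integral_mono_ae (hcint _ (hpc q)) hJint ?_
    filter_upwards [haeY] with y hy using hpJ q hq y hy
  have hφu : (φ.restrict Y) Set.univ = 1 := by
    rw [Measure.restrict_apply_univ]
    exact (prob_compl_eq_zero_iff hYm).1 hφY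
  haveI : IsProbabilityMeasure (φ.restrict Y) := ⟨hφu⟩
  have hSJ : sSup S = ∫ y in Y, J y ∂φ := by
    apply le_antisymm
    · exact csSup_le ⟨_, ps 0, hfeas 0, rfl⟩ hub
    · refine le_of_tendsto' hgint fun k => ?_
      refine le_of_forall_pos_le_add fun δ hδ => ?_
      obtain ⟨q, hq⟩ := aux_poly Y hYc (fun y => g k y - δ / 2)
        ((hgc k).sub continuous_const) (δ / 2) (by positivity)
      have h1 : ∀ w ∈ K, MvPolynomial.eval w.2 q ≤ f w := fun w hw => by
        have := (abs_lt.mp (hq w.2 (hKY w hw))).2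
        have := hgf k w hw
        linarith
      have h2 : ∫ y in Y, MvPolynomial.eval y q ∂φ ≤ sSup S :=
        le_csSup ⟨_, hub⟩ ⟨q, h1, rfl⟩
      have h3 : ∫ y in Y, g k y ∂φ ≤ ∫ y in Y, (MvPolynomial.eval y q + δ) ∂φ := by
        refine integral_mono_ae (hcint _ (hgc k))
          (hcint _ ((hpc q).add continuous_const)) ?_
        filter_upwards [haeY] with y hy
        have := (abs_lt.mp (hq y hy)).1
        linarith
      rw [integral_add (hcint _ (hpc q)) (integrable_const _)] at h3
      simp only [integral_const, probReal_univ, one_smul] at h3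
      linarith
  rw [hSJ] at hmax
  have htc : ∀ i, Continuous (ptilde i) := by
    intro i
    induction i with
    | zero => rw [hpt0]; exact hpc _
    | succ i ih => rw [hptS]; exact ih.max (hpc _)
  have htJ : ∀ i, ∀ y ∈ Y, ptilde i y ≤ J y := by
    intro i y hy
    induction i with
    | zero => rw [hpt0]; exact hpJ _ (hfeas 0) y hy
    | succ i ih => rw [hptS]; exact max_le ih (hpJ _ (hfeas _) y hy)
  have htp : ∀ i y, MvPolynomial.eval y (ps i) ≤ ptilde i y := by
    intro i y
    cases i with
    | zero => rw [hpt0]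
    | succ i => rw [hptS]; exact le_max_right _ _
  have htm : ∀ y, Monotone fun i => ptilde i y := fun y =>
    monotone_nat_of_le_succ fun i => by rw [hptS]; exact le_max_left _ _
  have htint : Tendsto (fun i => ∫ y in Y, ptilde i y ∂φ) atTop (𝓝 (∫ y in Y, J y ∂φ)) := by
    refine tendsto_of_tendsto_of_tendsto_of_le_of_le hmax tendsto_const_nhds
      (fun i => integral_mono (hcint _ (hpc _)) (hcint _ (htc i)) (htp i)) fun i => ?_
    refine integral_mono_ae (hcint _ (htc i)) hJint ?_
    filter_upwards [haeY] with y hy using htJ i y hy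
  have hae := tendsto_of_integral_tendsto_of_monotone (fun i => hcint _ (htc i)) hJint htint
    (Eventually.of_forall htm) (by filter_upwards [haeY] with y hy using fun i => htJ i y hy)
  rw [ae_restrict_iff' hYm] at hae
  intro ε hε
  obtain ⟨δ, hδ, hδε⟩ : ∃ δ : ℝ, 0 < δ ∧ ENNReal.ofReal δ < ε := by
    obtain ⟨r, hr0, hr⟩ := ENNReal.lt_iff_exists_nnreal_btwn.1 hε
    exact ⟨r, by exact_mod_cast hr0, by simpa using hr⟩
  obtain ⟨A, hAY, hAm, hA, hu⟩ := tendstoUniformlyOn_of_ae_tendsto (μ := φ) (f := ptilde)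
    (g := Y.indicator J) (s := Y) (fun i => (htc i).stronglyMeasurable) hJm hYm
    (measure_ne_top _ _) (by
      filter_upwards [hae] with y hy hyY
      simpa [hyY] using hy hyY) hδ
  refine ⟨A, hAY, hAm, hA.trans_lt hδε, hu.congr_right fun y hy => ?_⟩
  simp [hy.1]
end

section
/- Suppose Y ⊂ ℝ^p and K are compact and, with φ a Borel probability measure on Y, the dual values satisfy: sup over continuous functions equals sup over polynomials; that is, sup{ ∫_Y h dφ : h : Y → ℝ continuous, f(x,y) − h(y) ≥ 0 for all (x,y) ∈ K } = sup{ ∫_Y p dφ : p a real polynomial in y with f(x,y) − p(y) ≥ 0 for all (x,y) ∈ K }. -/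
open MeasureTheory Set TopologicalSpace Filter Topology

theorem poly_approx (p : ℕ) (Y : Set (Fin p → ℝ)) (hYc : IsCompact Y)
    (g : (Fin p → ℝ) → ℝ) (hg : ContinuousOn g Y) (ε : ℝ) (hε : 0 < ε) :
    ∃ q : MvPolynomial (Fin p) ℝ, ∀ y ∈ Y, |MvPolynomial.eval y q - g y| < ε := by
  have : CompactSpace Y := isCompact_iff_compactSpace.mp hYc
  let c : Fin p → C(Y, ℝ) := fun i => ⟨fun y => y.1 i, (continuous_apply i).comp continuous_subtype_val⟩
  let A : Subalgebra ℝ C(Y, ℝ) := (MvPolynomial.aeval c : MvPolynomial (Fin p) ℝ →ₐ[ℝ] C(Y, ℝ)).range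
  have hA : A.SeparatesPoints := by
    intro x y hxy
    have : ∃ i, x.1 i ≠ y.1 i := by
      by_contra hcon
      push Not at hcon
      exact hxy (Subtype.ext (funext hcon))
    obtain ⟨i, hi⟩ := this
    exact ⟨c i, ⟨c i, ⟨MvPolynomial.X i, by simp⟩, rfl⟩, hi⟩
  obtain ⟨⟨a, q, hq⟩, ha⟩ := ContinuousMap.exists_mem_subalgebra_near_continuous_of_separatesPoints
    A hA (Y.domRestrict g) hg.domRestrict ε hε
  refine ⟨q, fun y hy => ?_⟩
  have h1 := ha ⟨y, hy⟩
  have h2 : a ⟨y, hy⟩ = MvPolynomial.eval y q := by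
    rw [← hq]
    have : ∀ q : MvPolynomial (Fin p) ℝ,
        (MvPolynomial.aeval c q : C(Y, ℝ)) ⟨y, hy⟩ = MvPolynomial.eval y q := by
      intro q
      induction q using MvPolynomial.induction_on with
      | C r => simp [MvPolynomial.algebraMap_eq]
      | add a b ha hb => simp [ha, hb]
      | mul_X a i ha => simp [ha, c]
    exact this q
  simpa [h2, Real.norm_eq_abs, Set.domRestrict_apply] using h1

/-- the dual value over continuous test functions on `Y` equals the dual
value over polynomials. -/
theorem stmt9 (n p m : ℕ)
    (Y : Set (Fin p → ℝ)) (hYc : IsCompact Y)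
    (f : (Fin n → ℝ) × (Fin p → ℝ) → ℝ) (hf : Continuous f)
    (h : Fin m → (Fin n → ℝ) × (Fin p → ℝ) → ℝ) (hh : ∀ j, Continuous (h j))
    (K : Set ((Fin n → ℝ) × (Fin p → ℝ)))
    (hKdef : K = {w | w.2 ∈ Y ∧ ∀ j, 0 ≤ h j w}) (hKc : IsCompact K)
    (φ : Measure (Fin p → ℝ)) [IsProbabilityMeasure φ] (hφY : φ Yᶜ = 0) :
    sSup {r | ∃ g : (Fin p → ℝ) → ℝ, ContinuousOn g Y ∧
        (∀ w ∈ K, g w.2 ≤ f w) ∧ r = ∫ y in Y, g y ∂φ}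
      = sSup {r | ∃ q : MvPolynomial (Fin p) ℝ,
        (∀ w ∈ K, MvPolynomial.eval w.2 q ≤ f w) ∧
        r = ∫ y in Y, MvPolynomial.eval y q ∂φ} := by
  have hKY : ∀ w ∈ K, w.2 ∈ Y := by
    intro w hw
    rw [hKdef] at hw
    exact hw.1
  have hpc : ∀ q : MvPolynomial (Fin p) ℝ, ContinuousOn (fun y => MvPolynomial.eval y q) Y :=
    fun q => (MvPolynomial.continuous_eval q).continuousOn
  have hY1 : φ.real Y = 1 := by
    have : φ Y = 1 := (prob_compl_eq_zero_iff hYc.measurableSet).mp hφY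
    simp [Measure.real, this]
  set A : Set ℝ := {r | ∃ g : (Fin p → ℝ) → ℝ, ContinuousOn g Y ∧
        (∀ w ∈ K, g w.2 ≤ f w) ∧ r = ∫ y in Y, g y ∂φ} with hA
  set B : Set ℝ := {r | ∃ q : MvPolynomial (Fin p) ℝ,
        (∀ w ∈ K, MvPolynomial.eval w.2 q ≤ f w) ∧
        r = ∫ y in Y, MvPolynomial.eval y q ∂φ} with hB
  have hBA : B ⊆ A := by
    rintro r ⟨q, hq, hr⟩
    exact ⟨fun y => MvPolynomial.eval y q, hpc q, hq, hr⟩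
  have hAB : ∀ a ∈ A, ∀ ε > 0, ∃ b ∈ B, a - ε ≤ b := by
    rintro a ⟨g, hg, hgf, rfl⟩ ε hε
    obtain ⟨q, hq⟩ := poly_approx p Y hYc g hg (ε / 2) (by positivity)
    refine ⟨_, ⟨q - MvPolynomial.C (ε / 2), fun w hw => ?_, rfl⟩, ?_⟩
    · have h1 := abs_lt.mp (hq w.2 (hKY w hw))
      have h2 := hgf w hw
      simp only [map_sub, MvPolynomial.eval_C]
      linarith [h1.2]
    · have hgi : IntegrableOn g Y φ := hg.integrableOn_compact hYc
      have hci : IntegrableOn (fun _ : Fin p → ℝ => ε) Y φ := integrableOn_const (by simp)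
      have e : ∫ y in Y, (g y - ε) ∂φ = (∫ y in Y, g y ∂φ) - ε := by
        rw [integral_sub hgi hci]
        simp [hY1]
      rw [← e]
      refine setIntegral_mono_on (hgi.sub hci) ((hpc _).integrableOn_compact hYc)
        hYc.measurableSet fun y hy => ?_
      have h1 := abs_lt.mp (hq y hy)
      simp only [map_sub, MvPolynomial.eval_C]
      linarith [h1.1]
  have hBne : B.Nonempty := by
    obtain ⟨c, hc⟩ := hKc.bddBelow_image hf.continuousOn
    refine ⟨_, MvPolynomial.C c, fun w hw => ?_, rfl⟩
    simpa using hc (mem_image_of_mem f hw)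
  by_cases hbd : BddAbove A
  · apply le_antisymm
    · refine csSup_le (hBne.mono hBA) fun a ha => le_of_forall_pos_le_add fun ε hε => ?_
      obtain ⟨b, hb, hab⟩ := hAB a ha ε hε
      linarith [le_csSup (hbd.mono hBA) hb]
    · exact csSup_le_csSup hbd hBne hBA
  · have hbd' : ¬ BddAbove B := by
      rintro ⟨M, hM⟩
      refine hbd ⟨M + 1, fun a ha => ?_⟩
      obtain ⟨b, hb, hab⟩ := hAB a ha 1 one_pos
      linarith [hM hb]
    rw [Real.sSup_of_not_bddAbove hbd, Real.sSup_of_not_bddAbove hbd']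
end

section
/- Let h_1, …, h_t ∈ ℝ[x,y] satisfy the Archimedean assumption and let K := {(x,y) ∈ ℝ^n × ℝ^p : h_k(x,y) ≥ 0, k = 1, …, t}. A real sequence z = (z_{αβ})_{α∈ℕ^n, β∈ℕ^p} has a representing finite Borel measure supported on K (i.e., z_{αβ} = ∫_K x^α y^β dμ for some finite Borel measure μ on K) if and only if M_i(z) ⪰ 0 and M_i(h_k z) ⪰ 0 for every i ∈ ℕ and every k = 1, …, t. -/
open MeasureTheory MvPolynomial Set

noncomputable section

/-- The Riesz-like linear functional `L_z` associated with a double-indexed real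
sequence `z = (z_{αβ})`, sending `Σ f_{αβ} x^α y^β` to `Σ f_{αβ} z_{αβ}`. -/
def Lz (n p : ℕ) (z : (Fin n → ℕ) → (Fin p → ℕ) → ℝ)
    (q : MvPolynomial (Fin n ⊕ Fin p) ℝ) : ℝ :=
  ∑ d ∈ q.support, q.coeff d * z (fun k => d (Sum.inl k)) (fun l => d (Sum.inr l))

/-- The Archimedean (Putinar) assumption for the family `H`: for some `N`,
`N - ‖(x,y)‖²` lies in the quadratic module generated by the `H j`. -/
def ArchimedeanQM (n p : ℕ) {ι : Type*} [Fintype ι]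
    (H : ι → MvPolynomial (Fin n ⊕ Fin p) ℝ) : Prop :=
  ∃ (N : ℝ) (σ0 : MvPolynomial (Fin n ⊕ Fin p) ℝ)
    (σ : ι → MvPolynomial (Fin n ⊕ Fin p) ℝ),
    IsSumSq σ0 ∧ (∀ j, IsSumSq (σ j)) ∧
    C N - (∑ i : Fin n ⊕ Fin p, X i ^ 2) = σ0 + ∑ j, σ j * H j


section PutinarAux

variable {A ι : Type*} [CommRing A] [Algebra ℝ A]

def PosF (h : ι → A) (L : A →ₗ[ℝ] ℝ) : Prop :=
  (∀ q, 0 ≤ L (q ^ 2)) ∧ ∀ k q, 0 ≤ L (h k * q ^ 2)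

def shiftF (g : A) (L : A →ₗ[ℝ] ℝ) : A →ₗ[ℝ] ℝ := L.comp (LinearMap.mulLeft ℝ g)

lemma shiftF_apply (g : A) (L : A →ₗ[ℝ] ℝ) (a : A) : shiftF g L a = L (g * a) := rfl

lemma psd_cs (L : A →ₗ[ℝ] ℝ) (hL : ∀ q, 0 ≤ L (q ^ 2)) (u v : A) :
    L (u * v) ^ 2 ≤ L (u ^ 2) * L (v ^ 2) := by
  have key : ∀ s : ℝ, 0 ≤ L (v ^ 2) * (s * s) + (2 * L (u * v)) * s + L (u ^ 2) := by
    intro s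
    have h1 := hL (u + s • v)
    have h2 : (u + s • v) ^ 2 = u ^ 2 + (2 * s) • (u * v) + (s * s) • v ^ 2 := by
      simp only [Algebra.smul_def, map_mul, map_ofNat]
      ring
    rw [h2] at h1
    simp only [map_add, map_smul, smul_eq_mul] at h1
    linarith
  have := discrim_le_zero key
  unfold discrim at this
  nlinarith

lemma PosF.shift {h : ι → A} {L : A →ₗ[ℝ] ℝ} (hL : PosF h L) (f : A) :
    PosF h (shiftF (f ^ 2) L) := by
  refine ⟨fun q => ?_, fun k q => ?_⟩
  · rw [shiftF_apply, ← mul_pow]; exact hL.1 _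
  · rw [shiftF_apply, show f ^ 2 * (h k * q ^ 2) = h k * (f * q) ^ 2 by ring]
    exact hL.2 _ _

lemma PosF.sumsq {h : ι → A} {L : A →ₗ[ℝ] ℝ} (hL : PosF h L) {s : A} (hs : IsSumSq s) :
    0 ≤ L s := by
  induction hs with
  | zero => simp
  | sq_add a _ ih => rw [map_add, ← pow_two]; exact add_nonneg (hL.1 _) ih

lemma PosF.sumsq_mul {h : ι → A} {L : A →ₗ[ℝ] ℝ} (hL : PosF h L) {s : A} (hs : IsSumSq s)
    (k : ι) : 0 ≤ L (s * h k) := by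
  induction hs with
  | zero => simp
  | sq_add a _ ih =>
    rw [add_mul, map_add, ← pow_two, mul_comm (a ^ 2)]; exact add_nonneg (hL.2 _ _) ih

/-- growth lemma for log-convex sequences -/
lemma growth (s : ℕ → ℝ) (c D : ℝ) (hc : 0 < c) (hs : ∀ k, 0 ≤ s k)
    (hlog : ∀ k, s (k + 1) ^ 2 ≤ s k * s (k + 2)) (hg : ∀ k, s k ≤ D * c ^ k) :
    s 1 ≤ c * s 0 := by
  by_contra! hlt
  have h0 : 0 < s 0 := by
    rcases (hs 0).lt_or_eq with h | h
    · exact h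
    · have := hlog 0
      rw [← h] at this hlt
      simp at this hlt
      rw [this] at hlt
      simp at hlt
  set r := s 1 / s 0 with hr
  have hrc : c < r := by rw [hr, lt_div_iff₀ h0]; exact hlt
  have hr0 : 0 < r := hc.trans hrc
  have hstep : ∀ k, 0 < s k ∧ r * s k ≤ s (k + 1) := by
    intro k
    induction k with
    | zero => exact ⟨h0, by rw [hr, div_mul_cancel₀ _ h0.ne']⟩
    | succ k ih =>
      have hp : 0 < s (k + 1) := lt_of_lt_of_le (mul_pos hr0 ih.1) ih.2
      refine ⟨hp, ?_⟩
      have h1 := hlog k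
      by_contra! h2
      have h3 : s k * s (k + 2) < s k * (r * s (k + 1)) := mul_lt_mul_of_pos_left h2 ih.1
      nlinarith [mul_le_mul_of_nonneg_right ih.2 hp.le]
  have hpow : ∀ k, r ^ k * s 0 ≤ s k := by
    intro k
    induction k with
    | zero => simp
    | succ k ih =>
      calc r ^ (k + 1) * s 0 = r * (r ^ k * s 0) := by ring
        _ ≤ r * s k := by gcongr
        _ ≤ _ := (hstep k).2
  have hq : 1 < r / c := by rw [lt_div_iff₀ hc]; linarith
  obtain ⟨k, hk⟩ := pow_unbounded_of_one_lt (D / s 0) hq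
  rw [div_pow, div_lt_div_iff₀ h0 (pow_pos hc k)] at hk
  linarith [hpow k, hg k]

lemma sq_pow_bound (L : A →ₗ[ℝ] ℝ) (f : A) (C : ℝ) (hC0 : 0 ≤ C)
    (hC : ∀ g : A, L (g ^ 2 * f ^ 2) ≤ C * L (g ^ 2)) (k : ℕ) :
    L (f ^ (2 * k)) ≤ C ^ k * L 1 := by
  induction k with
  | zero => simp
  | succ k ih =>
    have := hC (f ^ k)
    calc L (f ^ (2 * (k + 1))) = L ((f ^ k) ^ 2 * f ^ 2) := by congr 1; ring
      _ ≤ C * L ((f ^ k) ^ 2) := this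
      _ = C * L (f ^ (2 * k)) := by congr 2; ring
      _ ≤ C * (C ^ k * L 1) := by gcongr
      _ = _ := by ring

def BddAlg (h : ι → A) : Prop :=
  ∀ f : A, ∃ C : ℝ, 0 < C ∧ ∀ L : A →ₗ[ℝ] ℝ, PosF h L → L (f ^ 2) ≤ C * L 1

lemma PosF.compl {h : ι → A} {L : A →ₗ[ℝ] ℝ} (hL : PosF h L) (f : A) (C : ℝ) (hC0 : 0 < C)
    (hC : ∀ L : A →ₗ[ℝ] ℝ, PosF h L → L (f ^ 2) ≤ C * L 1) :
    PosF h (shiftF (algebraMap ℝ A C - f ^ 2) L) := by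
  have hC' : ∀ g : A, L (g ^ 2 * f ^ 2) ≤ C * L (g ^ 2) := by
    intro g
    simpa [shiftF_apply] using hC _ (hL.shift g)
  have hexp : ∀ u : A, L ((algebraMap ℝ A C - f ^ 2) * u) = C * L u - L (u * f ^ 2) := by
    intro u
    rw [sub_mul, map_sub, ← Algebra.smul_def, map_smul, smul_eq_mul, mul_comm u]
  refine ⟨fun q => ?_, fun k q => ?_⟩
  · rw [shiftF_apply, hexp]
    linarith [hC' q]
  · rw [shiftF_apply, hexp]
    set u := h k * q ^ 2 with hu
    have hφ : ∀ g, 0 ≤ shiftF u L (g ^ 2) := by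
      intro g
      rw [shiftF_apply, hu, mul_assoc, ← mul_pow]
      exact hL.2 _ _
    have := growth (fun j => shiftF u L (f ^ (2 * j))) C (√(L (u ^ 2)) * √(L 1)) hC0
      (fun j => by rw [mul_comm 2 j, pow_mul]; exact hφ _) (fun j => by
        have := psd_cs (shiftF u L) hφ (f ^ j) (f ^ (j + 2))
        convert this using 3 <;> ring_nf) (fun j => by
        have h1 := psd_cs L hL.1 u (f ^ (2 * j))
        have h2 := sq_pow_bound L f C hC0.le hC' (2 * j)
        have h10 : 0 ≤ L 1 := by simpa using hL.1 1
        have h3 : L (u * f ^ (2 * j)) ^ 2 ≤ (√(L (u ^ 2)) * √(L 1) * C ^ j) ^ 2 := by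
          rw [mul_pow, mul_pow, Real.sq_sqrt (hL.1 u), Real.sq_sqrt h10]
          calc _ ≤ _ := h1
            _ = L (u ^ 2) * L (f ^ (2 * (2 * j))) := by congr 2; ring
            _ ≤ L (u ^ 2) * (C ^ (2 * j) * L 1) := by gcongr; exact hL.1 u
            _ = _ := by ring
        exact abs_le_of_sq_le_sq' h3 (by positivity) |>.2)
    simp [shiftF_apply] at this
    linarith

/-- states -/
def StF (h : ι → A) : Set (A → ℝ) :=
  {φ | (∀ a b, φ (a + b) = φ a + φ b) ∧ (∀ (c : ℝ) a, φ (c • a) = c * φ a) ∧ φ 1 = 1 ∧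
    (∀ q, 0 ≤ φ (q ^ 2)) ∧ ∀ k q, 0 ≤ φ (h k * q ^ 2)}

lemma StF.lin {h : ι → A} {φ : A → ℝ} (hφ : φ ∈ StF h) :
    ∃ L : A →ₗ[ℝ] ℝ, PosF h L ∧ L 1 = 1 ∧ ⇑L = φ :=
  ⟨⟨⟨φ, hφ.1⟩, hφ.2.1⟩, ⟨hφ.2.2.2.1, hφ.2.2.2.2⟩, hφ.2.2.1, rfl⟩

lemma PosF.mem_StF {h : ι → A} {L : A →ₗ[ℝ] ℝ} (hL : PosF h L) (h1 : L 1 = 1) :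
    ⇑L ∈ StF h := ⟨map_add L, fun c a => by simp, h1, hL.1, hL.2⟩

lemma StF.convex (h : ι → A) : Convex ℝ (StF h) := by
  intro φ hφ ψ hψ a b ha hb hab
  refine ⟨fun x y => ?_, fun c x => ?_, ?_, fun q => ?_, fun k q => ?_⟩ <;>
    simp only [Pi.add_apply, Pi.smul_apply, smul_eq_mul]
  · rw [hφ.1, hψ.1]; ring
  · rw [hφ.2.1, hψ.2.1]; ring
  · rw [hφ.2.2.1, hψ.2.2.1]; linarith
  · exact add_nonneg (mul_nonneg ha (hφ.2.2.2.1 q)) (mul_nonneg hb (hψ.2.2.2.1 q))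
  · exact add_nonneg (mul_nonneg ha (hφ.2.2.2.2 k q)) (mul_nonneg hb (hψ.2.2.2.2 k q))

lemma StF.compact (h : ι → A) (hb : BddAlg h) : IsCompact (StF h) := by
  choose C hC0 hC using hb
  have hcl : IsClosed (StF h) := by
    simp only [StF, Set.ofPred_and, Set.ofPred_forall]
    refine IsClosed.inter ?_ (IsClosed.inter ?_ (IsClosed.inter ?_ (IsClosed.inter ?_ ?_)))
    · exact isClosed_iInter fun a => isClosed_iInter fun b =>
        isClosed_eq (by fun_prop) (by fun_prop)
    · exact isClosed_iInter fun a => isClosed_iInter fun b =>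
        isClosed_eq (by fun_prop) (by fun_prop)
    · exact isClosed_eq (by fun_prop) (by fun_prop)
    · exact isClosed_iInter fun a => isClosed_le (by fun_prop) (by fun_prop)
    · exact isClosed_iInter fun a => isClosed_iInter fun b =>
        isClosed_le (by fun_prop) (by fun_prop)
  refine IsCompact.of_isClosed_subset
    (isCompact_univ_pi (fun a => isCompact_Icc (a := -√(C a)) (b := √(C a)))) hcl ?_
  intro φ hφ a _
  obtain ⟨L, hL, h1, rfl⟩ := StF.lin hφ
  have h2 := psd_cs L hL.1 a 1
  have h3 := hC a L hL
  simp [h1] at h2 h3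
  exact abs_le.1 (Real.abs_le_sqrt (h2.trans h3))

lemma StF.extreme_mul {h : ι → A} (hb : BddAlg h) {φ : A → ℝ}
    (hφ : φ ∈ (StF h).extremePoints ℝ) (f g : A) : φ (f * g) = φ f * φ g := by
  have hsq : ∀ f g : A, φ (f ^ 2 * g) = φ (f ^ 2) * φ g := by
    intro f g
    obtain ⟨L, hL, h1, rfl⟩ := StF.lin hφ.1
    obtain ⟨C, hC0, hC⟩ := hb f
    have hC' : ∀ L : A →ₗ[ℝ] ℝ, PosF h L → L (f ^ 2) ≤ (C + 1) * L 1 := by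
      intro L hL
      have := hL.1 1
      simp at this
      linarith [hC L hL]
    have hcomp := hL.compl f (C + 1) (by linarith) hC'
    have hle := hC L hL
    rw [h1, mul_one] at hle
    set b := L (f ^ 2) with hbdef
    rcases (hL.1 f).lt_or_eq with hpos | hzero
    · rw [← hbdef] at hpos
      set L1 := b⁻¹ • shiftF (f ^ 2) L with hL1
      set L2 := (C + 1 - b)⁻¹ • shiftF (algebraMap ℝ A (C + 1) - f ^ 2) L with hL2
      have hd : 0 < C + 1 - b := by linarith
      have hs : ∀ (c : ℝ) (M : A →ₗ[ℝ] ℝ), 0 ≤ c → PosF h M → PosF h (c • M) :=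
        fun c M hc hM => ⟨fun q => mul_nonneg hc (hM.1 q), fun k q => mul_nonneg hc (hM.2 k q)⟩
      have m1 : ⇑L1 ∈ StF h := (hs _ _ (by positivity) (hL.shift f)).mem_StF (by
        simp [shiftF_apply, ← hbdef, hpos.ne'])
      have m2 : ⇑L2 ∈ StF h := (hs _ _ (by positivity) hcomp).mem_StF (by
        rw [LinearMap.smul_apply, shiftF_apply, mul_one, map_sub, Algebra.algebraMap_eq_smul_one,
          map_smul, h1, ← hbdef, smul_eq_mul, smul_eq_mul, mul_one, inv_mul_cancel₀ hd.ne'])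
      have hC1 : 0 < C + 1 := by linarith
      have hseg : ⇑L ∈ openSegment ℝ ⇑L1 ⇑L2 := by
        refine ⟨b / (C + 1), (C + 1 - b) / (C + 1), by positivity, by positivity,
          by field_simp; ring, ?_⟩
        ext a
        simp only [Pi.add_apply, Pi.smul_apply, smul_eq_mul, hL1, hL2, LinearMap.smul_apply,
          shiftF_apply, sub_mul, map_sub, ← Algebra.smul_def, map_smul]
        field_simp
        ring
      have := hφ.2 m1 m2 hseg
      have h5 := congrFun this g
      simp only [hL1, LinearMap.smul_apply, shiftF_apply, smul_eq_mul] at h5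
      rw [← h5]
      field_simp
    · rw [← hbdef] at hzero
      rw [← hzero, zero_mul]
      have := psd_cs L hL.1 f (f * g)
      rw [← hbdef, ← hzero, zero_mul] at this
      rw [show f ^ 2 * g = f * (f * g) by ring]
      exact pow_eq_zero_iff (two_ne_zero) |>.1 (le_antisymm this (sq_nonneg _))
  obtain ⟨L, hL, h1, rfl⟩ := StF.lin hφ.1
  have e1 := hsq (f + 1) g
  have e2 := hsq f g
  have e3 : (f + 1) ^ 2 = f ^ 2 + (f + f) + 1 := by ring
  rw [e3] at e1
  simp only [add_mul, map_add, one_mul, h1] at e1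
  linarith

theorem PosF.nonneg_of {h : ι → A} (hb : BddAlg h) {L : A →ₗ[ℝ] ℝ} (hL : PosF h L) (f : A)
    (hf : ∀ χ : A →ₐ[ℝ] ℝ, (∀ k, 0 ≤ χ (h k)) → 0 ≤ χ f) : 0 ≤ L f := by
  have main : StF h ⊆ {φ | 0 ≤ φ f} := by
    rw [← closure_convexHull_extremePoints (StF.compact h hb) (StF.convex h)]
    refine closure_minimal (convexHull_min ?_ ?_) (isClosed_le (by fun_prop) (by fun_prop))
    · intro φ hφ
      have hm := StF.extreme_mul hb hφ
      obtain ⟨M, hM, h1, rfl⟩ := StF.lin hφ.1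
      have := hf (AlgHom.ofLinearMap M h1 hm) (fun k => by simpa using hM.2 k 1)
      simpa using this
    · intro φ hφ ψ hψ a b ha hb _
      exact add_nonneg (mul_nonneg ha hφ) (mul_nonneg hb hψ)
  have h10 : 0 ≤ L 1 := by simpa using hL.1 1
  rcases h10.lt_or_eq with hpos | hzero
  · have hp : PosF h ((L 1)⁻¹ • L) :=
      ⟨fun q => mul_nonneg (by positivity) (hL.1 q),
        fun k q => mul_nonneg (by positivity) (hL.2 k q)⟩
    have := main (hp.mem_StF (by simp [hpos.ne']))
    simp only [Set.mem_ofPred_eq, LinearMap.smul_apply, smul_eq_mul] at this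
    exact (mul_nonneg_iff_of_pos_left (by positivity)).1 this
  · have := psd_cs L hL.1 f 1
    simp [← hzero] at this
    exact this.ge

end PutinarAux

section PutinarMeas

lemma bddAlg_mv {σ ι : Type*} [Fintype σ] [Fintype ι] (h : ι → MvPolynomial σ ℝ) (N : ℝ)
    (s0 : MvPolynomial σ ℝ) (s : ι → MvPolynomial σ ℝ) (hs0 : IsSumSq s0)
    (hs : ∀ j, IsSumSq (s j))
    (heq : C N - (∑ i : σ, X i ^ 2) = s0 + ∑ j, s j * h j) : BddAlg h := by
  have hX : ∀ (i : σ) (L : MvPolynomial σ ℝ →ₗ[ℝ] ℝ), PosF h L →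
      L (X i ^ 2) ≤ (|N| + 1) * L 1 := by
    intro i L hL
    have h1 : 0 ≤ L (C N - (∑ i : σ, X i ^ 2)) := by
      rw [heq, map_add, map_sum]
      exact add_nonneg (hL.sumsq hs0) (Finset.sum_nonneg fun j _ => hL.sumsq_mul (hs j) j)
    have h2 : L (C N) = N * L 1 := by
      rw [← MvPolynomial.algebraMap_eq, Algebra.algebraMap_eq_smul_one, map_smul, smul_eq_mul]
    rw [map_sub, h2, map_sum] at h1
    have h3 : L (X i ^ 2) ≤ ∑ i : σ, L (X i ^ 2) :=
      Finset.single_le_sum (f := fun i => L (X i ^ 2)) (fun j _ => hL.1 _) (Finset.mem_univ i)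
    have h10 : 0 ≤ L 1 := by simpa using hL.1 1
    nlinarith [mul_le_mul_of_nonneg_right (le_abs_self N) h10]
  intro f
  induction f using MvPolynomial.induction_on with
  | C a =>
    refine ⟨a ^ 2 + 1, by positivity, fun L hL => ?_⟩
    have h2 : L (C a ^ 2) = a ^ 2 * L 1 := by
      rw [← map_pow, ← MvPolynomial.algebraMap_eq, Algebra.algebraMap_eq_smul_one, map_smul,
        smul_eq_mul]
    have h10 : 0 ≤ L 1 := by simpa using hL.1 1
    rw [h2]; linarith
  | add f g hf hg =>
    obtain ⟨c, hc, hcf⟩ := hf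
    obtain ⟨d, hd, hdg⟩ := hg
    refine ⟨2 * c + 2 * d, by positivity, fun L hL => ?_⟩
    have h1 := hL.1 (f - g)
    have h2 : (f + g) ^ 2 + (f - g) ^ 2 = (f ^ 2 + f ^ 2) + (g ^ 2 + g ^ 2) := by ring
    have h3 := congrArg L h2
    simp only [map_add] at h3
    linarith [hcf L hL, hdg L hL]
  | mul_X f i hf =>
    obtain ⟨c, hc, hcf⟩ := hf
    refine ⟨(|N| + 1) * c, by positivity, fun L hL => ?_⟩
    have h1 := hX i _ (hL.shift f)
    rw [shiftF_apply, shiftF_apply, mul_one, ← mul_pow] at h1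
    calc _ ≤ _ := h1
      _ ≤ (|N| + 1) * (c * L 1) := by gcongr; exact hcf L hL
      _ = _ := by ring

theorem exists_meas {A X : Type*} [CommRing A] [Algebra ℝ A] [TopologicalSpace X] [CompactSpace X]
    [T2Space X] [MeasurableSpace X] [BorelSpace X] (ev : A →ₗ[ℝ] C(X, ℝ)) (h1 : ev 1 = 1)
    (L : A →ₗ[ℝ] ℝ) (hL : ∀ f, (∀ x, 0 ≤ ev f x) → 0 ≤ L f) :
    ∃ μ : Measure X, IsFiniteMeasure μ ∧ ∀ f, L f = ∫ x, ev f x ∂μ := by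
  let s : PointedCone ℝ (A × C(X, ℝ)) :=
    { carrier := {p | ∀ x, 0 ≤ ev p.1 x + p.2 x}
      zero_mem' := by simp
      smul_mem' := by
        rintro ⟨c, hc⟩ ⟨f, φ⟩ hp x
        have := mul_nonneg hc (hp x)
        have e : (⟨c, hc⟩ : {c : ℝ // 0 ≤ c}) • ((f, φ) : A × C(X, ℝ)) = (c • f, c • φ) := rfl
        rw [e]
        simp only [map_smul, ContinuousMap.smul_apply, smul_eq_mul]
        simp only at this
        linarith
      add_mem' := by
        rintro ⟨f, φ⟩ ⟨g, ψ⟩ hp hq x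
        have h1 := hp x
        have h2 := hq x
        simp only [Prod.mk_add_mk, map_add, ContinuousMap.add_apply] at h1 h2 ⊢
        linarith }
  have hs : ∀ p, p ∈ s ↔ ∀ x, 0 ≤ ev p.1 x + p.2 x := fun p => Iff.rfl
  let F : (A × C(X, ℝ)) →ₗ.[ℝ] ℝ :=
    ⟨Submodule.prod ⊤ ⊥, (L.comp (LinearMap.fst ℝ A C(X, ℝ))).comp (Submodule.subtype _)⟩
  have hF : ∀ x : F.domain, F x = L x.1.1 := fun x => rfl
  have hdom : ∀ a : A, ((a, 0) : A × C(X, ℝ)) ∈ F.domain := fun a => by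
    simp [F, Submodule.mem_prod]
  obtain ⟨g, hg1, hg2⟩ := riesz_extension s F (by
    rintro ⟨⟨f, φ⟩, hx⟩ hxs
    have hφ : φ = 0 := by simpa [F, Submodule.mem_prod] using hx
    subst hφ
    rw [hF]
    apply hL
    intro x
    simpa using (hs _).1 hxs x) (by
    rintro ⟨f, φ⟩
    refine ⟨⟨((‖ev f‖ + ‖φ‖) • 1, 0), hdom _⟩, ?_⟩
    rw [hs]
    intro x
    have a1 := (abs_le.1 ((ev f).norm_coe_le_norm x)).1
    have a2 := (abs_le.1 (φ.norm_coe_le_norm x)).1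
    simp [h1]
    linarith)
  have hgL : ∀ f, g (0, ev f) = L f := by
    intro f
    have e1 : g (f, 0) = L f := hg1 ⟨(f, 0), hdom f⟩
    have e2 := hg2 (f, - ev f) (by rw [hs]; intro x; simp)
    have e3 := hg2 (-f, ev f) (by rw [hs]; intro x; simp)
    have e4 : ((f, - ev f) : A × C(X, ℝ)) = (f, 0) - (0, ev f) := by simp
    have e5 : ((-f, ev f) : A × C(X, ℝ)) = (0, ev f) - (f, 0) := by simp
    rw [e4, map_sub] at e2
    rw [e5, map_sub] at e3
    linarith
  let Λ : CompactlySupportedContinuousMap X ℝ →ₚ[ℝ] ℝ := PositiveLinearMap.mk₀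
    { toFun := fun φ => g (0, φ.toContinuousMap)
      map_add' := fun φ ψ => by rw [← map_add]; congr 1; ext <;> simp
      map_smul' := fun c φ => by
        rw [RingHom.id_apply, ← map_smul]; congr 1; ext <;> simp }
    (fun φ hφ => hg2 _ (by rw [hs]; intro x; simpa using hφ x))
  refine ⟨RealRMK.rieszMeasure Λ, inferInstance, fun f => ?_⟩
  have := RealRMK.integral_rieszMeasure Λ
    (CompactlySupportedContinuousMap.continuousMapEquiv (ev f))
  rw [← hgL f]
  exact this.symm

end PutinarMeas

def LzLin (n p : ℕ) (z : (Fin n → ℕ) → (Fin p → ℕ) → ℝ) :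
    MvPolynomial (Fin n ⊕ Fin p) ℝ →ₗ[ℝ] ℝ :=
  (basisMonomials (Fin n ⊕ Fin p) ℝ).constr ℝ
    (fun d => z (fun k => d (Sum.inl k)) (fun l => d (Sum.inr l)))

lemma LzLin_apply (n p : ℕ) (z : (Fin n → ℕ) → (Fin p → ℕ) → ℝ)
    (q : MvPolynomial (Fin n ⊕ Fin p) ℝ) : LzLin n p z q = Lz n p z q := by
  rw [LzLin, Module.Basis.constr_apply]
  rfl

lemma LzLin_monomial (n p : ℕ) (z : (Fin n → ℕ) → (Fin p → ℕ) → ℝ)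
    (d : (Fin n ⊕ Fin p) →₀ ℕ) : LzLin n p z (monomial d 1) =
      z (fun k => d (Sum.inl k)) (fun l => d (Sum.inr l)) := by
  have h := (basisMonomials (Fin n ⊕ Fin p) ℝ).constr_basis ℝ
    (fun d => z (fun k => d (Sum.inl k)) (fun l => d (Sum.inr l))) d
  rwa [MvPolynomial.coe_basisMonomials] at h

lemma eval_mono (n p : ℕ) (d : (Fin n ⊕ Fin p) →₀ ℕ) (w : (Fin n → ℝ) × (Fin p → ℝ)) :
    eval (Sum.elim w.1 w.2) (monomial d (1 : ℝ)) =
      (∏ k, w.1 k ^ d (Sum.inl k)) * ∏ l, w.2 l ^ d (Sum.inr l) := by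
  rw [eval_monomial, one_mul, Finsupp.prod_fintype _ _ (by simp), Fintype.prod_sum_type]
  simp

lemma cont_eval (n p : ℕ) (q : MvPolynomial (Fin n ⊕ Fin p) ℝ) :
    Continuous (fun w : (Fin n → ℝ) × (Fin p → ℝ) => eval (Sum.elim w.1 w.2) q) := by
  have : Continuous (fun w : (Fin n → ℝ) × (Fin p → ℝ) => (Sum.elim w.1 w.2 : _ → ℝ)) := by
    refine continuous_pi fun i => ?_
    cases i <;> simp <;> fun_prop
  exact (MvPolynomial.continuous_eval q).comp this

lemma K_compact (n p t : ℕ) (hs : Fin t → MvPolynomial (Fin n ⊕ Fin p) ℝ)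
    (harch : ArchimedeanQM n p hs) :
    IsCompact {w : (Fin n → ℝ) × (Fin p → ℝ) | ∀ k, 0 ≤ eval (Sum.elim w.1 w.2) (hs k)} := by
  obtain ⟨N, s0, s, hs0, hss, heq⟩ := harch
  have hcl : IsClosed {w : (Fin n → ℝ) × (Fin p → ℝ) |
      ∀ k, 0 ≤ eval (Sum.elim w.1 w.2) (hs k)} := by
    rw [Set.ofPred_forall]
    exact isClosed_iInter fun k => isClosed_le continuous_const (cont_eval n p _)
  have hsq : ∀ (v : Fin n ⊕ Fin p → ℝ) (q : MvPolynomial (Fin n ⊕ Fin p) ℝ),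
      IsSumSq q → 0 ≤ eval v q := by
    intro v q hq
    induction hq with
    | zero => simp
    | sq_add a _ ih => rw [map_add, map_mul]; exact add_nonneg (mul_self_nonneg _) ih
  refine IsCompact.of_isClosed_subset ((isCompact_univ_pi (fun _ : Fin n =>
    isCompact_Icc (a := -√N) (b := √N))).prod (isCompact_univ_pi (fun _ : Fin p =>
    isCompact_Icc (a := -√N) (b := √N)))) hcl ?_
  intro w hw
  have h1 : 0 ≤ eval (Sum.elim w.1 w.2) (C N - (∑ i : Fin n ⊕ Fin p, X i ^ 2)) := by
    rw [heq, map_add, map_sum]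
    refine add_nonneg (hsq _ _ hs0) (Finset.sum_nonneg fun j _ => ?_)
    rw [map_mul]
    exact mul_nonneg (hsq _ _ (hss j)) (hw j)
  simp only [map_sub, eval_C, map_sum, map_pow, eval_X, sub_nonneg] at h1
  have h2 : ∀ i, (Sum.elim w.1 w.2 : Fin n ⊕ Fin p → ℝ) i ^ 2 ≤ N := fun i =>
    (Finset.single_le_sum (f := fun i => (Sum.elim w.1 w.2 : Fin n ⊕ Fin p → ℝ) i ^ 2)
      (fun j _ => sq_nonneg _) (Finset.mem_univ i)).trans h1
  exact ⟨fun i _ => abs_le.1 (Real.abs_le_sqrt (h2 (Sum.inl i))),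
    fun i _ => abs_le.1 (Real.abs_le_sqrt (h2 (Sum.inr i)))⟩

/-- Putinar-type moment problem: under the Archimedean assumption, a
sequence `z` has a representing finite Borel measure supported on `K` iff all moment
matrices `M_i(z)` and localizing matrices `M_i(h_k z)` are positive semidefinite;
positive semidefiniteness of `M_i(z)` (resp. `M_i(h_k z)`) for all `i` is expressed
through nonnegativity of the quadratic forms `c ↦ cᵀ M_i(z) c = L_z(q²)`
(resp. `L_z(h_k q²)`), `q` ranging over all polynomials. -/
theorem stmt10 (n p t : ℕ)
    (hs : Fin t → MvPolynomial (Fin n ⊕ Fin p) ℝ)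
    (harch : ArchimedeanQM n p hs)
    (K : Set ((Fin n → ℝ) × (Fin p → ℝ)))
    (hKdef : K = {w | ∀ k, 0 ≤ eval (Sum.elim w.1 w.2) (hs k)})
    (z : (Fin n → ℕ) → (Fin p → ℕ) → ℝ) :
    (∃ μ : Measure ((Fin n → ℝ) × (Fin p → ℝ)), IsFiniteMeasure μ ∧ μ Kᶜ = 0 ∧
      ∀ (α : Fin n → ℕ) (β : Fin p → ℕ),
        z α β = ∫ w in K, (∏ k, w.1 k ^ α k) * ∏ l, w.2 l ^ β l ∂μ)
    ↔
    ((∀ q : MvPolynomial (Fin n ⊕ Fin p) ℝ, 0 ≤ Lz n p z (q ^ 2)) ∧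
      ∀ k, ∀ q : MvPolynomial (Fin n ⊕ Fin p) ℝ, 0 ≤ Lz n p z (hs k * q ^ 2)) := by
  classical
  have hKc : IsCompact K := hKdef ▸ K_compact n p t hs harch
  simp only [← LzLin_apply]
  constructor
  · rintro ⟨μ, hμ, hμK, hz⟩
    have hint : ∀ q : MvPolynomial (Fin n ⊕ Fin p) ℝ,
        Integrable (fun w : (Fin n → ℝ) × (Fin p → ℝ) => eval (Sum.elim w.1 w.2) q)
          (μ.restrict K) := fun q =>
      (cont_eval n p q).continuousOn.integrableOn_compact hKc
    have hmon : ∀ d a, LzLin n p z (monomial d a) =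
        ∫ w in K, eval (Sum.elim w.1 w.2) (monomial d a) ∂μ := by
      intro d a
      have e : monomial d a = a • monomial d (1 : ℝ) := by simp [smul_monomial]
      rw [e, map_smul, LzLin_monomial, hz]
      simp only [smul_eval, integral_const_mul, eval_mono, smul_eq_mul]
    have hrep : ∀ q, LzLin n p z q = ∫ w in K, eval (Sum.elim w.1 w.2) q ∂μ := by
      intro q
      induction q using MvPolynomial.monomial_add_induction_on with
      | C a => exact hmon 0 a
      | monomial_add d a f _ _ hf =>
        rw [map_add, hf, hmon]
        simp only [map_add]
        rw [integral_add (hint _) (hint _)]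
    refine ⟨fun q => ?_, fun k q => ?_⟩
    · rw [hrep]
      exact integral_nonneg fun w => by simp only [map_pow, Pi.zero_apply]; positivity
    · rw [hrep]
      refine setIntegral_nonneg hKc.measurableSet fun w hw => ?_
      rw [hKdef] at hw
      rw [map_mul, map_pow]
      exact mul_nonneg (hw k) (sq_nonneg _)
  · intro hpos
    have hP : PosF hs (LzLin n p z) := hpos
    have hb : BddAlg hs := by
      obtain ⟨N, s0, s, hs0, hss, heq⟩ := harch
      exact bddAlg_mv hs N s0 s hs0 hss heq
    haveI : CompactSpace K := isCompact_iff_compactSpace.1 hKc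
    let ev : MvPolynomial (Fin n ⊕ Fin p) ℝ →ₗ[ℝ] C(K, ℝ) :=
      { toFun := fun q => ⟨fun w => eval (Sum.elim w.1.1 w.1.2) q,
          (cont_eval n p q).comp continuous_subtype_val⟩
        map_add' := fun a b => by ext w; simp
        map_smul' := fun c a => by ext w; simp [smul_eval] }
    have hev : ∀ q w, ev q w = eval (Sum.elim w.1.1 w.1.2) q := fun q w => rfl
    obtain ⟨μ, hμ, hrep⟩ := exists_meas ev (by ext w; simp [hev]) (LzLin n p z) (by
      intro f hf
      refine hP.nonneg_of hb f fun χ hχ => ?_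
      have hχe : ∀ q, χ q = eval (Sum.elim (fun i => χ (X (Sum.inl i)))
          (fun i => χ (X (Sum.inr i)))) q := by
        intro q
        have : χ = aeval (Sum.elim (fun i => χ (X (Sum.inl i)))
          (fun i => χ (X (Sum.inr i)))) := by
          ext i
          cases i <;> simp
        conv_lhs => rw [this]
        rfl
      have hw : ((fun i => χ (X (Sum.inl i))), (fun i => χ (X (Sum.inr i)))) ∈ K := by
        rw [hKdef]
        intro k
        rw [← hχe]
        exact hχ k
      rw [hχe]
      exact hf ⟨_, hw⟩)
    refine ⟨μ.map Subtype.val, inferInstance, ?_, ?_⟩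
    · rw [Measure.map_apply measurable_subtype_coe hKc.measurableSet.compl]
      simp
    · intro α β
      have hm := LzLin_monomial n p z (Finsupp.equivFunOnFinite.symm (Sum.elim α β))
      simp only [Finsupp.equivFunOnFinite_symm_apply_apply, Sum.elim_inl, Sum.elim_inr] at hm
      have hme := MeasurableEmbedding.subtype_coe hKc.measurableSet
      rw [← hm, hrep, hme.setIntegral_map]
      simp only [hev, eval_mono]
      simp
end
end
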